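/- For every Dyck path λ of order n, the total number of cover-inclusive Dyck tilings whose lower path is λ equals n! divided by the product, over all chords c of λ, of the length |c|; that is, |D(λ,*)| = n! / Π_{chords c of λ} |c|. -/

import Mathlib

open Finset

noncomputable section

/-- A Dyck path of order `n`: a word of `2n` steps (`true` = up-step `(+1,+1)`,
`false` = down-step `(+1,-1)`) from `(-n,0)` to `(n,0)` staying weakly above the x-axis. -/
structure DyckPath (n : ℕ) where
  step : Fin (2 * n) → Bool
  balanced : (Finset.univ.filter fun i => step i = true).card = n
  nonneg : ∀ k : ℕ, k ≤ 2 * n →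
    (Finset.univ.filter fun i : Fin (2 * n) => (i : ℕ) < k ∧ step i = false).card ≤
      (Finset.univ.filter fun i : Fin (2 * n) => (i : ℕ) < k ∧ step i = true).card

namespace DyckPath

/-- Height of the path above column `x` (columns run from `-n` to `n`). -/
def ht {n : ℕ} (P : DyckPath n) (x : ℤ) : ℤ :=
  ((Finset.univ.filter fun i : Fin (2 * n) => ((i : ℕ) : ℤ) < x + n ∧ P.step i = true).card : ℤ) -
    ((Finset.univ.filter fun i : Fin (2 * n) => ((i : ℕ) : ℤ) < x + n ∧ P.step i = false).card : ℤ)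

/-- Height of the path at lattice point number `k`, `0 ≤ k ≤ 2n`
(point `k` lies at column `k - n`). -/
def pt {n : ℕ} (P : DyckPath n) (k : ℕ) : ℤ := P.ht ((k : ℤ) - n)

end DyckPath

/-- `IsChord P p q`: the up-step at (0-indexed) position `p` matches the down-step at
position `q`, forming a chord of `P`. -/
def IsChord {n : ℕ} (P : DyckPath n) (p q : ℕ) : Prop :=
  p < q ∧ q < 2 * n ∧
    (∃ hp : p < 2 * n, P.step ⟨p, hp⟩ = true) ∧
    (∃ hq : q < 2 * n, P.step ⟨q, hq⟩ = false) ∧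
    P.pt (q + 1) = P.pt p ∧
    ∀ m : ℕ, p < m → m ≤ q → P.pt p < P.pt m

/-- A natural labeling of the chord poset of `P`: the chord labeled `i` has its up-step at
(0-indexed) position `l i` and matching down-step at position `r i`; distinct labels name
distinct chords; and if one chord is nested inside another it receives a larger label. -/
structure ChordLabeling {n : ℕ} (P : DyckPath n) where
  l : Fin n → ℕ
  r : Fin n → ℕ
  chord : ∀ i, IsChord P (l i) (r i)
  inj : Function.Injective l
  natural : ∀ i j : Fin n, l j < l i → r i < r j → j < i

/-- The length of the chord labeled `i`: the number of up steps of `P` between and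
including its two endpoints. -/
def chordLen {n : ℕ} {P : DyckPath n} (C : ChordLabeling P) (i : Fin n) : ℕ :=
  (Finset.univ.filter fun m : Fin (2 * n) =>
    C.l i ≤ (m : ℕ) ∧ (m : ℕ) ≤ C.r i ∧ P.step m = true).card

/-- The growth sequence `p_1, …, p_n` associated with a natural chord labeling:
`p i = #{j<i : l j < l i} + #{j<i : r j < l i}`. -/
def seqOf {n : ℕ} {P : DyckPath n} (C : ChordLabeling P) (i : Fin n) : ℕ :=
  (Finset.univ.filter fun j : Fin n => j < i ∧ C.l j < C.l i).card +
    (Finset.univ.filter fun j : Fin n => j < i ∧ C.r j < C.l i).card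

/-- `σ` is the standardization of the word `w` (with distinct letters). -/
def IsStandardization {n : ℕ} (w : Fin n → ℕ) (σ : Equiv.Perm (Fin n)) : Prop :=
  ∀ i j : Fin n, σ i < σ j ↔ w i < w j

/-- `σ ∈ 𝓛(P_λ)`: σ is `L₀ ∘ L⁻¹` for some natural labeling `L` of the chord poset,
equivalently the standardization of the word of left endpoints of a natural labeling. -/
def LinExt {n : ℕ} (P : DyckPath n) (σ : Equiv.Perm (Fin n)) : Prop :=
  ∃ C : ChordLabeling P, IsStandardization C.l σ

/-- Successor index in `Fin n` (used only under the guard `i+1 < n`). -/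
def nextIdx {n : ℕ} (i : Fin n) : Fin n := ⟨((i : ℕ) + 1) % n, Nat.mod_lt _ i.pos⟩

/-- Descent set of a word: positions `i` with `i+1 < n` and `w i > w (i+1)`. -/
def descentFinset {n : ℕ} (w : Fin n → ℕ) : Finset (Fin n) :=
  Finset.univ.filter fun i => (i : ℕ) + 1 < n ∧ w (nextIdx i) < w i

/-- Number of inversions of a word. -/
def wordInv {n : ℕ} (w : Fin n → ℕ) : ℕ :=
  (Finset.univ.filter fun p : Fin n × Fin n => p.1 < p.2 ∧ w p.2 < w p.1).card

/-- The word of values of a permutation. -/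
def permWord {n : ℕ} (σ : Equiv.Perm (Fin n)) : Fin n → ℕ := fun i => (σ i : ℕ)

/-- inv(σ). -/
def permInv {n : ℕ} (σ : Equiv.Perm (Fin n)) : ℕ := wordInv (permWord σ)

/-- des(σ). -/
def permDes {n : ℕ} (σ : Equiv.Perm (Fin n)) : ℕ := (descentFinset (permWord σ)).card

/-- `REM_i(w) = {k > i : w i > w k > w (i+1)}`, the right embraced numbers. -/
def remSet {n : ℕ} (w : Fin n → ℕ) (i : Fin n) : Finset (Fin n) :=
  Finset.univ.filter fun k => i < k ∧ w (nextIdx i) < w k ∧ w k < w i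

/-- desdif(σ) = Σ_{i ∈ DES σ} (σ i − σ (i+1)). -/
def desdif {n : ℕ} (σ : Equiv.Perm (Fin n)) : ℕ :=
  ∑ i ∈ descentFinset (permWord σ), (permWord σ i - permWord σ (nextIdx i))

/-- res(σ) = Σ_{i ∈ DES σ} #{k < i : σ i > σ k > σ (i+1)}. -/
def resStat {n : ℕ} (σ : Equiv.Perm (Fin n)) : ℕ :=
  ∑ i ∈ descentFinset (permWord σ),
    (Finset.univ.filter fun k : Fin n =>
      k < i ∧ permWord σ (nextIdx i) < permWord σ k ∧ permWord σ k < permWord σ i).card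

/-- The Mahonian statistic mad(σ) = desdif(σ) + res(σ). -/
def mad {n : ℕ} (σ : Equiv.Perm (Fin n)) : ℕ := desdif σ + resStat σ

/-- σ avoids the pattern 231. -/
def Avoids231 {n : ℕ} (σ : Equiv.Perm (Fin n)) : Prop :=
  ¬∃ i j k : Fin n, i < j ∧ j < k ∧ σ k < σ i ∧ σ i < σ j

/-- The boxes of the skew shape `lam/mu` (with `mu` weakly above `lam`), each box
recorded by its bottom corner (a lattice point `(x, z)` with `z ≡ x + n (mod 2)`). -/
def skewCells {n : ℕ} (lam mu : DyckPath n) : Finset (ℤ × ℤ) :=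
  ((Finset.Icc (-(n : ℤ)) n) ×ˢ (Finset.Icc (0 : ℤ) n)).filter fun c =>
    lam.ht c.1 ≤ c.2 ∧ c.2 + 2 ≤ mu.ht c.1 ∧ (c.2 - c.1 - n) % 2 = 0

/-- A Dyck tile, recorded by the set of bottom corners of its boxes: these form
a Dyck-path shape, i.e. a ±1-step lattice path whose two ends are lowest. -/
def IsDyckTile (t : Finset (ℤ × ℤ)) : Prop :=
  ∃ (a b : ℤ) (f : ℤ → ℤ), a ≤ b ∧
    (∀ x : ℤ, a ≤ x → x < b → f (x + 1) = f x + 1 ∨ f (x + 1) = f x - 1) ∧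
    f b = f a ∧ (∀ x : ℤ, a ≤ x → x ≤ b → f a ≤ f x) ∧
    t = (Finset.Icc a b).image fun x => (x, f x)

/-- A Dyck tiling of order `n`: a tiling of the skew shape between two Dyck paths of
order `n` by Dyck tiles. -/
structure DyckTiling (n : ℕ) where
  lower : DyckPath n
  upper : DyckPath n
  below : ∀ x : ℤ, lower.ht x ≤ upper.ht x
  tiles : Finset (Finset (ℤ × ℤ))
  isDyck : ∀ t ∈ tiles, IsDyckTile t
  disj : ∀ t ∈ tiles, ∀ u ∈ tiles, t ≠ u → Disjoint t u
  cover : tiles.biUnion id = skewCells lower upper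

namespace DyckTiling

/-- Number of boxes of the skew shape. -/
def area {n : ℕ} (T : DyckTiling n) : ℕ := (skewCells T.lower T.upper).card

/-- Number of tiles. -/
def numTiles {n : ℕ} (T : DyckTiling n) : ℕ := T.tiles.card

/-- art(T) = (area(T) + tiles(T)) / 2. -/
def art {n : ℕ} (T : DyckTiling n) : ℕ := (T.area + T.numTiles) / 2

/-- dis(T): the number of step positions where the lower path steps down while the
upper path steps up. -/
def dis {n : ℕ} (T : DyckTiling n) : ℕ :=
  (Finset.univ.filter fun i : Fin (2 * n) =>
    T.lower.step i = false ∧ T.upper.step i = true).card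

/-- Cover-inclusiveness: whenever a tile has a box strictly above a box of another tile,
its horizontal extent is contained in that of the other tile. -/
def CoverInclusive {n : ℕ} (T : DyckTiling n) : Prop :=
  ∀ t ∈ T.tiles, ∀ u ∈ T.tiles,
    (∃ p ∈ t, ∃ q ∈ u, (p : ℤ × ℤ).1 = (q : ℤ × ℤ).1 ∧ (q : ℤ × ℤ).2 < (p : ℤ × ℤ).2) →
    ∀ p ∈ t, ∃ y : ℤ, ((p : ℤ × ℤ).1, y) ∈ u

end DyckTiling

/-- Height function of the spread at column `s` of a Dyck path. -/
def spreadHt {n : ℕ} (P : DyckPath n) (s x : ℤ) : ℤ :=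
  if x < s then P.ht (x + 1) else if x = s then P.ht s + 1 else P.ht (x - 1)

/-- Spread of a tile at column `s`: points left of `s` move left, points right of `s`
move right, and a point at column `s` is duplicated upward. -/
def spreadTile (s : ℤ) (t : Finset (ℤ × ℤ)) : Finset (ℤ × ℤ) :=
  ((t.filter fun p => p.1 ≤ s).image fun p => (p.1 - 1, p.2)) ∪
    ((t.filter fun p => p.1 = s).image fun p => (p.1, p.2 + 1)) ∪
    ((t.filter fun p => s ≤ p.1).image fun p => (p.1 + 1, p.2))

/-- Spread of a set of tiles at column `s`. -/
def spreadTiles (s : ℤ) (ts : Finset (Finset (ℤ × ℤ))) : Finset (Finset (ℤ × ℤ)) :=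
  ts.image (spreadTile s)

/-- Column `c` is eligible for a tiling with upper-boundary height function `h` and
tile set `ts`: the upper boundary has an up step ending at column `c`, and its point at
column `c` is not the top corner of a one-box tile. -/
def EligibleCol (h : ℤ → ℤ) (ts : Finset (Finset (ℤ × ℤ))) (c : ℤ) : Prop :=
  h c = h (c - 1) + 1 ∧ ({(c, h c - 2)} : Finset (ℤ × ℤ)) ∉ ts

/-- `T'` is the result of the strip-grow map applied to `(T, s)`: spread `T` at `s` and
add a one-box tile on each up step of the (spread) upper boundary starting at a column
`≥ s` (i.e. strictly to the right of column `s`). -/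
def StripGrowRel {n : ℕ} (T : DyckTiling n) (s : ℤ) (T' : DyckTiling (n + 1)) : Prop :=
  (∀ x : ℤ, T'.lower.ht x = spreadHt T.lower s x) ∧
  (∀ x : ℤ, T'.upper.ht x =
    if s ≤ x ∧ spreadHt T.upper s (x + 1) = spreadHt T.upper s x + 1 then
      spreadHt T.upper s x + 2
    else spreadHt T.upper s x) ∧
  T'.tiles = spreadTiles s T.tiles ∪
    ((Finset.Icc s (n : ℤ)).filter fun x =>
        spreadHt T.upper s (x + 1) = spreadHt T.upper s x + 1).image
      (fun x => ({(x, spreadHt T.upper s x)} : Finset (ℤ × ℤ)))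

/-- `T'` is the result of the ribbon-grow map applied to `(T, s)`: spread `T` at `s`,
and if the special column `Q` of the spread tiling is strictly right of `s`, add a
ribbon of one-box tiles at all columns strictly between `s` and `Q`. -/
def RibbonGrowRel {n : ℕ} (T : DyckTiling n) (s : ℤ) (T' : DyckTiling (n + 1)) : Prop :=
  (∀ x : ℤ, T'.lower.ht x = spreadHt T.lower s x) ∧
  ∃ Q : ℤ,
    EligibleCol (spreadHt T.upper s) (spreadTiles s T.tiles) Q ∧
    (∀ c : ℤ, EligibleCol (spreadHt T.upper s) (spreadTiles s T.tiles) c → c ≤ Q) ∧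
    (∀ x : ℤ, T'.upper.ht x =
      if s < x ∧ x < Q then spreadHt T.upper s x + 2 else spreadHt T.upper s x) ∧
    T'.tiles = spreadTiles s T.tiles ∪
      (Finset.Ioo s Q).image (fun x => ({(x, spreadHt T.upper s x)} : Finset (ℤ × ℤ)))

/-- `s` is the special column of `T`: its rightmost eligible column. -/
def SpecialCol {n : ℕ} (T : DyckTiling n) (s : ℤ) : Prop :=
  EligibleCol T.upper.ht T.tiles s ∧ ∀ c : ℤ, EligibleCol T.upper.ht T.tiles c → c ≤ s

/-- In the strip-shrink map applied to `T'` with special column `s`, a one-box tile is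
removed at column `x`: `x` is right of `s` and there is a one-box tile there that is
part of an up step of the upper boundary. -/
def StripRemovedAt {n : ℕ} (T' : DyckTiling n) (s x : ℤ) : Prop :=
  s < x ∧ T'.upper.ht x = T'.upper.ht (x - 1) + 1 ∧
    ({(x, T'.upper.ht x - 2)} : Finset (ℤ × ℤ)) ∈ T'.tiles

instance {n : ℕ} (T' : DyckTiling n) (s x : ℤ) : Decidable (StripRemovedAt T' s x) := by
  unfold StripRemovedAt; infer_instance

/-- `(T, s)` is the result of the strip-shrink map applied to `T'`: `s` is the special
column of `T'`; all one-box tiles right of `s` lying on up steps of the upper boundary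
are removed; and the result is the spread of `T` at `s`. -/
def StripShrinkRel {n : ℕ} (T' : DyckTiling (n + 1)) (T : DyckTiling n) (s : ℤ) : Prop :=
  SpecialCol T' s ∧
  (∀ x : ℤ, spreadHt T.lower s x = T'.lower.ht x) ∧
  (∀ x : ℤ, spreadHt T.upper s x =
    if StripRemovedAt T' s x then T'.upper.ht x - 2 else T'.upper.ht x) ∧
  spreadTiles s T.tiles =
    T'.tiles \ (((Finset.Ioc s ((n : ℤ) + 1)).filter fun x => StripRemovedAt T' s x).image
      fun x => ({(x, T'.upper.ht x - 2)} : Finset (ℤ × ℤ)))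

/-- `(T, s)` is the result of the ribbon-shrink map applied to `T'`: `s` is the special
column of `T'`; the maximal run of topmost one-box tiles in columns `s+1, s+2, …` is
removed; and the result is the spread of `T` at `s`. -/
def RibbonShrinkRel {n : ℕ} (T' : DyckTiling (n + 1)) (T : DyckTiling n) (s : ℤ) : Prop :=
  SpecialCol T' s ∧
  ∃ r : ℤ, s < r ∧
    (∀ x : ℤ, s < x → x < r → ({(x, T'.upper.ht x - 2)} : Finset (ℤ × ℤ)) ∈ T'.tiles) ∧
    ({(r, T'.upper.ht r - 2)} : Finset (ℤ × ℤ)) ∉ T'.tiles ∧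
    (∀ x : ℤ, spreadHt T.lower s x = T'.lower.ht x) ∧
    (∀ x : ℤ, spreadHt T.upper s x =
      if s < x ∧ x < r then T'.upper.ht x - 2 else T'.upper.ht x) ∧
    spreadTiles s T.tiles =
      T'.tiles \ ((Finset.Ioo s r).image fun x => ({(x, T'.upper.ht x - 2)} : Finset (ℤ × ℤ)))

/-- `IsDTS n p T`: `T` is the Dyck tiling `DTS(p_1, …, p_n)` (indices 0-based, so the
growth column for step `i` is `p i - i`). -/
inductive IsDTS : (n : ℕ) → (Fin n → ℕ) → DyckTiling n → Prop where
  | nil (p : Fin 0 → ℕ) (T : DyckTiling 0) : IsDTS 0 p T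
  | cons (n : ℕ) (p : Fin (n + 1) → ℕ) (T : DyckTiling n) (T' : DyckTiling (n + 1)) :
      IsDTS n (fun i => p i.castSucc) T →
      StripGrowRel T ((p (Fin.last n) : ℤ) - n) T' → IsDTS (n + 1) p T'

/-- `IsDTR n p T`: `T` is the Dyck tiling `DTR(p_1, …, p_n)`. -/
inductive IsDTR : (n : ℕ) → (Fin n → ℕ) → DyckTiling n → Prop where
  | nil (p : Fin 0 → ℕ) (T : DyckTiling 0) : IsDTR 0 p T
  | cons (n : ℕ) (p : Fin (n + 1) → ℕ) (T : DyckTiling n) (T' : DyckTiling (n + 1)) :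
      IsDTR n (fun i => p i.castSucc) T →
      RibbonGrowRel T ((p (Fin.last n) : ℤ) - n) T' → IsDTR (n + 1) p T'

/-- `T = DTS(λ, σ)`. -/
def IsDTSof {n : ℕ} (lam : DyckPath n) (σ : Equiv.Perm (Fin n)) (T : DyckTiling n) : Prop :=
  ∃ C : ChordLabeling lam, IsStandardization C.l σ ∧ IsDTS n (seqOf C) T

/-- `T = DTR(λ, σ)`. -/
def IsDTRof {n : ℕ} (lam : DyckPath n) (σ : Equiv.Perm (Fin n)) (T : DyckTiling n) : Prop :=
  ∃ C : ChordLabeling lam, IsStandardization C.l σ ∧ IsDTR n (seqOf C) T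

/-- Increment `a` if it exceeds `p`. -/
def bump (p a : ℕ) : ℕ := if p < a then a + 1 else a

/-- The perfect matching `match(p_1, …, p_n)` of `{1, …, 2n}`. -/
def matchSeq : (n : ℕ) → (Fin n → ℕ) → Finset (ℕ × ℕ)
  | 0, _ => ∅
  | n + 1, p =>
    ((matchSeq n fun i => p i.castSucc).image fun q =>
      (bump (p (Fin.last n)) q.1, bump (p (Fin.last n)) q.2)) ∪
      {(p (Fin.last n) + 1, 2 * (n + 1))}

/-- The number of nestings of a matching: pairs `(a,b)`, `(c,d)` with `c < a < b < d`. -/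
def nestings (M : Finset (ℕ × ℕ)) : ℕ :=
  ((M ×ˢ M).filter fun q => q.2.1 < q.1.1 ∧ q.1.1 < q.1.2 ∧ q.1.2 < q.2.2).card

/-- `w` is the min-word of `M`: the list of the smaller elements of the pairs of `M`,
sorted by the larger elements. -/
def IsMinWord (n : ℕ) (M : Finset (ℕ × ℕ)) (w : Fin n → ℕ) : Prop :=
  ∃ b : Fin n → ℕ, StrictMono b ∧ (∀ i, w i < b i) ∧
    M = Finset.univ.image fun i => (w i, b i)

/-- The number of tiles of `T` containing boxes over both endpoint columns of the
chord with endpoints at step positions `p < q`. -/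
def chordTileCount {n : ℕ} (T : DyckTiling n) (p q : ℕ) : ℕ :=
  (T.tiles.filter fun t =>
    (∃ c ∈ t, (c : ℤ × ℤ).1 = (p : ℤ) + 1 - n) ∧ (∃ c ∈ t, (c : ℤ × ℤ).1 = (q : ℤ) - n)).card

/-- A Dyck tableau of order `n` over the zigzag path `Z` of order `n+1`: a skew shape
`Z/μ` with `n` dots, one in each column of the skew shape through a valley of `Z`. -/
structure DyckTableau (n : ℕ) (Z : DyckPath (n + 1)) where
  upper : DyckPath (n + 1)
  below : ∀ x : ℤ, Z.ht x ≤ upper.ht x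
  dots : Finset (ℤ × ℤ)
  sub : dots ⊆ skewCells Z upper
  card_dots : dots.card = n
  valley : ∀ x : ℤ, Z.ht (x - 1) = Z.ht x + 1 → Z.ht (x + 1) = Z.ht x + 1 →
    (dots.filter fun c => c.1 = x).card = 1

/-- The `q`-integer `[m]_q = 1 + q + ⋯ + q^(m-1)` as a polynomial. -/
def qint (m : ℕ) : Polynomial ℤ := ∑ i ∈ Finset.range m, Polynomial.X ^ i

/-- The `q`-factorial `[n]_q!`. -/
def qfact (n : ℕ) : Polynomial ℤ := ∏ i ∈ Finset.range n, qint (i + 1)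

/-!
Every tile of a cover-inclusive tiling is a vertical translate of a piece of the lower path `λ`;
call the height of `λ` below the end boxes of the tile its base height. Extents shrink from bottom
to top, so over a fixed column the base heights weakly increase, and the tiling is determined by its
profile, the numbers `F x h` of tiles over column `x` with base height at most `h`: the boxes over
`x` and `x + 1` at level `l` above `λ` lie in one tile iff `l` is less than both `F x h` and
`F (x + 1) h`, where `h` is the smaller of the two heights of `λ`. Profiles are described by a rule
relating adjacent columns, and are therefore the runs of a nondeterministic automaton that reads the
steps of `λ`.

To count the runs, let `φ_w i` be their number for a remaining word `w` when `i` tiles have the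
current height of `λ` as base height, and let `S` be the shift `φ ↦ φ (· + 1)`. A down step acts on
these sequences by `1 + S`, since the next column has as many tiles as before it or one more. After
an up step it has as many or one fewer, and the topmost `i` or `i - 1` of them are divided in an
arbitrary way into lower ones based at the old height and upper ones based at the new one.
For every Dyck word `p` followed by `w`,
`(∏ |c|) * ((1 + S) ^ a φ_{pw}) 0 = (a + 1) ⋯ (a + |p|) * ((1 + S) ^ (a + |p|) φ_w) 0`,
where `c` runs over the chords of `p`. This follows by induction on the first-return decomposition
`p = U p' D q`. The up step turns the left-hand side into a sum over `0 ≤ e ≤ a`, in which `p'`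
contributes `(e + 1) ⋯ (e + m)` for `m = |p'|`, and the hockey-stick identity
`(m + 1) * ∑ e ≤ a, (e + 1) ⋯ (e + m) = (a + 1) ⋯ (a + m + 1)` accounts for the outer chord, of
length `m + 1`. The count of the tilings is the case `a = 0` with `w` empty.
-/

section Height

/-- The height over column `x` of the walk with steps `s` that starts over column `-n`, where
`true` is an up step. For Dyck paths this is `DyckPath.ht`; here `s` is any sequence. -/
def walkHt {n : ℕ} (s : Fin (2 * n) → Bool) (x : ℤ) : ℤ :=
  #{i : Fin (2 * n) | ((i : ℕ) : ℤ) < x + n ∧ s i = true} -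
    #{i : Fin (2 * n) | ((i : ℕ) : ℤ) < x + n ∧ s i = false}

theorem walkHt_eq_sum {n : ℕ} (s : Fin (2 * n) → Bool) (x : ℤ) :
    walkHt s x = ∑ i ∈ {i : Fin (2 * n) | ((i : ℕ) : ℤ) < x + n}, if s i then 1 else -1 := by
  rw [walkHt, ← filter_filter, ← filter_filter, sum_ite, sum_const, sum_const]
  simp [sub_eq_add_neg]

theorem walkHt_of_le {n : ℕ} (s : Fin (2 * n) → Bool) {x : ℤ} (hx : x ≤ -n) : walkHt s x = 0 := by
  rw [walkHt_eq_sum, filter_false_of_mem fun i _ => by omega, sum_empty]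

theorem walkHt_of_ge {n : ℕ} (s : Fin (2 * n) → Bool) {x : ℤ} (hx : n ≤ x) :
    walkHt s x = 2 * #{i | s i = true} - 2 * n := by
  have up_add_down := card_filter_add_card_filter_not (s := univ) fun i => s i = true
  have lt (i : Fin (2 * n)) : ((i : ℕ) : ℤ) < x + n := by omega
  simp only [card_univ, Fintype.card_fin, Bool.not_eq_true] at up_add_down
  simp only [walkHt, lt, true_and]
  omega

theorem walkHt_add_one {n : ℕ} (s : Fin (2 * n) → Bool) (i : Fin (2 * n)) {x : ℤ}
    (hx : x + n = (i : ℕ)) : walkHt s (x + 1) = walkHt s x + if s i then 1 else -1 := by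
  have filter_eq : univ.filter (fun j : Fin (2 * n) => ((j : ℕ) : ℤ) < x + 1 + n) =
      insert i (univ.filter fun j : Fin (2 * n) => ((j : ℕ) : ℤ) < x + n) := by
    ext j
    simp only [mem_filter, mem_univ, true_and, mem_insert, Fin.ext_iff]
    omega
  rw [walkHt_eq_sum, walkHt_eq_sum, filter_eq, sum_insert (by simp [hx]), add_comm]

namespace DyckPath

variable {n : ℕ} (P : DyckPath n)

theorem ht_eq_zero {x : ℤ} (hx : x ≤ -n ∨ n ≤ x) : P.ht x = 0 := by
  rcases hx with hx | hx
  · exact walkHt_of_le P.step hx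
  · exact (walkHt_of_ge P.step hx).trans (by simp [P.balanced])

theorem ht_nonneg (x : ℤ) : 0 ≤ P.ht x := by
  by_cases hx : x ≤ -n ∨ n ≤ x
  · rw [P.ht_eq_zero hx]
  · have h := P.nonneg (x + n).toNat (by omega)
    simp only [Int.lt_toNat] at h
    rw [ht]
    omega

theorem ht_add_one (i : Fin (2 * n)) {x : ℤ} (hx : x + n = (i : ℕ)) :
    P.ht (x + 1) = P.ht x + if P.step i then 1 else -1 :=
  walkHt_add_one P.step i hx

theorem ht_add_one_eq_or {x : ℤ} (h₁ : -n ≤ x) (h₂ : x < n) :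
    P.ht (x + 1) = P.ht x + 1 ∨ P.ht (x + 1) = P.ht x - 1 := by
  rw [P.ht_add_one ⟨(x + n).toNat, by omega⟩ (by simp only; omega)]
  split_ifs
  · exact Or.inl rfl
  · exact Or.inr rfl

theorem ht_adjacent {x y : ℤ} (hx : -n < x) (hx' : x < n) (hxy : y = x + 1 ∨ y = x - 1) :
    P.ht y = P.ht x + 1 ∨ P.ht y = P.ht x - 1 := by
  rcases hxy with rfl | rfl
  · exact P.ht_add_one_eq_or hx.le hx'
  · have := P.ht_add_one_eq_or (x := x - 1) (by omega) (by omega)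
    rw [sub_add_cancel] at this
    omega

theorem mem_Ico_of_ht_ne {x : ℤ} (hx : P.ht (x + 1) ≠ P.ht x) : -n ≤ x ∧ x < n := by
  by_contra outside
  exact hx (by rw [P.ht_eq_zero (by omega), P.ht_eq_zero (x := x) (by omega)])

theorem ht_parity {x : ℤ} (h₁ : -n ≤ x) (h₂ : x ≤ n) : (P.ht x - x - n) % 2 = 0 := by
  induction x, h₁ using Int.leInduction with
  | base => rw [P.ht_eq_zero (by simp)]; omega
  | succ x hx ih =>
    have := ih (by omega)
    have := P.ht_add_one_eq_or hx (by omega)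
    omega

theorem ht_le_add {x : ℤ} (h₁ : -n ≤ x) (h₂ : x ≤ n) : P.ht x ≤ x + n := by
  induction x, h₁ using Int.leInduction with
  | base => rw [P.ht_eq_zero (by simp)]; omega
  | succ x hx ih =>
    have := ih (by omega)
    have := P.ht_add_one_eq_or hx (by omega)
    omega

theorem ht_le_sub {x : ℤ} (h₁ : -n ≤ x) (h₂ : x ≤ n) : P.ht x ≤ n - x := by
  induction x, h₂ using Int.leInductionDown with
  | base => rw [P.ht_eq_zero (by simp)]; omega
  | pred x hx ih =>
    have := ih (by omega)
    have := P.ht_add_one_eq_or (x := x - 1) (by omega) (by omega)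
    rw [sub_add_cancel] at this
    omega

theorem ht_le (x : ℤ) : P.ht x ≤ n := by
  by_cases hx : x ≤ -n ∨ n ≤ x
  · rw [P.ht_eq_zero hx]
    omega
  · have := P.ht_le_add (x := x) (by omega) (by omega)
    have := P.ht_le_sub (x := x) (by omega) (by omega)
    omega

theorem ext_ht {P Q : DyckPath n} (h : P.ht = Q.ht) : P = Q := by
  have step_eq : P.step = Q.step := by
    funext i
    have hP := P.ht_add_one i (x := i - n) (by ring)
    have hQ := Q.ht_add_one i (x := i - n) (by ring)
    rw [h, hQ] at hP
    cases hs : P.step i <;> cases ht : Q.step i <;> simp [hs, ht] at hP ⊢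
  cases P
  cases Q
  cases step_eq
  rfl

theorem exists_ht_eq {h : ℤ → ℤ} (outside : ∀ x : ℤ, x ≤ -n ∨ n ≤ x → h x = 0)
    (step : ∀ x, -(n : ℤ) ≤ x → x < n → h (x + 1) = h x + 1 ∨ h (x + 1) = h x - 1)
    (nonneg : ∀ x, 0 ≤ h x) : ∃ P : DyckPath n, P.ht = h := by
  let s : Fin (2 * n) → Bool := fun i => h (i - n + 1) = h (i - n) + 1
  have walkHt_eq {x : ℤ} (h₁ : -n ≤ x) (h₂ : x ≤ n) : walkHt s x = h x := by
    induction x, h₁ using Int.leInduction with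
    | base => rw [walkHt_of_le s le_rfl, outside _ (by simp)]
    | succ x hx ih =>
      have cast_sub : (((x + n).toNat : ℕ) : ℤ) - n = x := by omega
      have s_eq : s ⟨(x + n).toNat, by omega⟩ = decide (h (x + 1) = h x + 1) := by
        simp only [s, cast_sub]
      rw [walkHt_add_one s ⟨(x + n).toNat, by omega⟩ (by simp only; omega), ih (by omega), s_eq]
      rcases step x hx (by omega) with hs | hs <;> simp [hs]
      omega
  have balanced : #{i | s i = true} = n := by
    have := (walkHt_of_ge s le_rfl).symm.trans (walkHt_eq (by omega) le_rfl)
    rw [outside _ (by simp)] at this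
    omega
  refine ⟨⟨s, balanced, fun k hk => ?_⟩, funext fun x => ?_⟩
  · have := nonneg (k - n)
    rw [← walkHt_eq (by omega) (by omega), walkHt] at this
    simp only [sub_add_cancel, Nat.cast_lt] at this
    omega
  · by_cases hx : x ≤ -n ∨ n ≤ x
    · rw [outside x hx, ht_eq_zero _ hx]
    · exact walkHt_eq (by omega) (by omega)

end DyckPath

end Height

section AddShift

/-- The operator `1 + S` on sequences, where `S` is the shift `φ ↦ φ (· + 1)`. Its powers compute
binomial sums: `(addShift ^ a) φ 0 = ∑ i, a.choose i * φ i`. -/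
def addShift : Module.End ℕ (ℕ → ℕ) := 1 + LinearMap.funLeft ℕ ℕ (· + 1)

theorem addShift_apply (φ : ℕ → ℕ) (i : ℕ) : addShift φ i = φ i + φ (i + 1) := rfl

theorem addShift_pow_translate (N t : ℕ) (φ : ℕ → ℕ) (i : ℕ) :
    (addShift ^ N) (fun j => φ (t + j)) i = (addShift ^ N) φ (t + i) := by
  have hcomm : Commute addShift (LinearMap.funLeft ℕ ℕ (t + ·)) := by
    ext
    simp [addShift_apply, add_assoc]
  exact congrFun (LinearMap.congr_fun (hcomm.pow_left N).eq φ) i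

theorem addShift_pow_mul (N c : ℕ) (φ : ℕ → ℕ) (i : ℕ) :
    (addShift ^ N) (fun j => c * φ j) i = c * (addShift ^ N) φ i :=
  congrFun (map_smul (addShift ^ N) c φ) i

/-- The sum of an array over its `i`-th and `(i - 1)`-st antidiagonals, the latter being empty for
`i = 0`. It describes the effect of an up step on the number of runs. -/
def upSum (X : ℕ → ℕ → ℕ) (i : ℕ) : ℕ :=
  ∑ t ∈ range (i + 1), X t (i - t) + ∑ t ∈ range i, X t (i - 1 - t)

theorem addShift_upSum (X : ℕ → ℕ → ℕ) :
    addShift (upSum X) = addShift (fun t => X t 0) + upSum fun t => addShift (X t) := by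
  funext i
  have diagonal_succ (j : ℕ) : ∑ t ∈ range (j + 1), X t (j - t) =
      X j 0 + ∑ t ∈ range j, X t (j - 1 - t + 1) := by
    rw [sum_range_succ, Nat.sub_self, add_comm]
    refine congrArg _ (sum_congr rfl fun t ht => congrArg _ ?_)
    rw [mem_range] at ht
    omega
  simp only [Pi.add_apply, addShift_apply, upSum, Nat.add_sub_cancel, sum_add_distrib]
  rw [diagonal_succ (i + 1), diagonal_succ i]
  simp only [Nat.add_sub_cancel]
  ring

theorem addShift_pow_upSum (a : ℕ) (X : ℕ → ℕ → ℕ) :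
    (addShift ^ a) (upSum X) 0 =
      ∑ e ∈ range (a + 1), (addShift ^ (a - e)) (fun t => (addShift ^ e) (X t) 0) 0 := by
  induction a generalizing X with
  | zero => simp [upSum]
  | succ a ih =>
    rw [pow_succ, Module.End.mul_apply, addShift_upSum, map_add, Pi.add_apply, ih,
      sum_range_succ' _ (a + 1), add_comm]
    simp only [pow_succ, Module.End.mul_apply, pow_zero, Module.End.one_apply, Nat.sub_zero,
      Nat.add_sub_add_right]

theorem succ_mul_sum_ascFactorial (a m : ℕ) :
    (m + 1) * ∑ e ∈ range (a + 1), (e + 1).ascFactorial m = (a + 1).ascFactorial (m + 1) := by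
  simp only [Nat.ascFactorial_eq_factorial_mul_choose, ← mul_sum]
  rw [Nat.sum_range_add_choose, ← mul_assoc, ← Nat.factorial_succ, add_assoc]

end AddShift

section Automaton

variable {α σ : Type*}

open Classical in
/-- The number of runs on a word, from the state `S` to the state `R`, of the nondeterministic
automaton with transitions `δ`. -/
def runCount (δ : α → σ → Finset σ) (R : σ) : List α → σ → ℕ
  | [], S => if S = R then 1 else 0
  | a :: w, S => ∑ S' ∈ δ a S, runCount δ R w S'

/-- The function `f`, replaced from `k` on by the constant value `i`. -/
def constFrom (k : ℤ) (i : ℕ) (f : ℤ → ℕ) (h : ℤ) : ℕ := if h < k then f h else i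

theorem constFrom_of_lt {k h : ℤ} (hk : h < k) (i : ℕ) (f : ℤ → ℕ) : constFrom k i f h = f h :=
  if_pos hk

theorem constFrom_of_le {k h : ℤ} (hk : k ≤ h) (i : ℕ) (f : ℤ → ℕ) : constFrom k i f h = i :=
  if_neg hk.not_gt

theorem constFrom_constFrom_of_le {k l : ℤ} (hkl : k ≤ l) (i j : ℕ) (f : ℤ → ℕ) :
    constFrom k i (constFrom l j f) = constFrom k i f := by
  funext h
  grind [constFrom]

open Classical in
/-- The automaton that reads the steps of the lower path of a cover-inclusive Dyck tiling and
produces the profile of the tiling column by column. In the state `(k, f)`, the height of the lower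
path is `k` and `f h` is the number of tiles over the current column whose base has height at most
`h`, so that `f` is constant from `k` on. -/
def columnStep : DyckStep → ℤ × (ℤ → ℕ) → Finset (ℤ × (ℤ → ℕ))
  | .U, (k, f) =>
    (Icc (f (k - 1)) (f k)).image (fun t => (k + 1, constFrom (k + 1) (f k) (constFrom k t f))) ∪
      (Ico (f (k - 1)) (f k)).image
        fun t => (k + 1, constFrom (k + 1) (f k - 1) (constFrom k t f))
  | .D, (k, f) => {(k - 1, constFrom (k - 1) (f k) f), (k - 1, constFrom (k - 1) (f k + 1) f)}

theorem sum_columnStep_up (k : ℤ) (f : ℤ → ℕ) (φ : ℤ × (ℤ → ℕ) → ℕ) :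
    ∑ S ∈ columnStep .U (k, f), φ S =
      ∑ t ∈ Icc (f (k - 1)) (f k), φ (k + 1, constFrom (k + 1) (f k) (constFrom k t f)) +
        ∑ t ∈ Ico (f (k - 1)) (f k),
          φ (k + 1, constFrom (k + 1) (f k - 1) (constFrom k t f)) := by
  classical
  have eq_of_states_eq {i j t u : ℕ}
      (h : (k + 1, constFrom (k + 1) i (constFrom k t f)) =
        (k + 1, constFrom (k + 1) j (constFrom k u f))) : i = j ∧ t = u := by
    have values_eq := congrFun (congrArg Prod.snd h)
    have at_succ := values_eq (k + 1)
    have at_self := values_eq k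
    simp only [constFrom, lt_irrefl, lt_add_one, if_true, if_false] at at_succ at_self
    exact ⟨at_succ, at_self⟩
  rw [columnStep, sum_union, sum_image fun t _ u _ h => (eq_of_states_eq h).2,
    sum_image fun t _ u _ h => (eq_of_states_eq h).2]
  simp only [disjoint_left, mem_image, mem_Icc, mem_Ico, not_exists, not_and]
  rintro _ ⟨t, -, rfl⟩ u hu h
  have := (eq_of_states_eq h).1
  omega

theorem sum_columnStep_down (k : ℤ) (f : ℤ → ℕ) (φ : ℤ × (ℤ → ℕ) → ℕ) :
    ∑ S ∈ columnStep .D (k, f), φ S =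
      φ (k - 1, constFrom (k - 1) (f k) f) + φ (k - 1, constFrom (k - 1) (f k + 1) f) := by
  classical
  rw [columnStep, sum_pair]
  intro h
  simpa [constFrom] using congrFun (congrArg Prod.snd h) (k - 1)

/-- The number of runs of `columnStep` on the word `w`, accepted at height `0` with no tiles, from
the column that agrees with `f` below height `k` and has `i` further tiles with base height `k`. -/
def columnRuns (w : List DyckStep) (k : ℤ) (f : ℤ → ℕ) (i : ℕ) : ℕ :=
  runCount columnStep (0, 0) w (k, constFrom k (f (k - 1) + i) f)

theorem columnRuns_up (w : List DyckStep) (k : ℤ) (f : ℤ → ℕ) :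
    columnRuns (.U :: w) k f =
      upSum fun t => columnRuns w (k + 1) (constFrom k (f (k - 1) + t) f) := by
  funext i
  have values : constFrom k (f (k - 1) + i) f (k - 1) = f (k - 1) ∧
      constFrom k (f (k - 1) + i) f k = f (k - 1) + i := by
    simp [constFrom]
  simp only [columnRuns, runCount, upSum, sum_columnStep_up, values,
    constFrom_constFrom_of_le le_rfl, add_sub_cancel_right, constFrom_of_le le_rfl]
  congr 1
  · rw [← Finset.Ico_succ_right_eq_Icc, sum_Ico_eq_sum_range, Order.succ_eq_add_one,
      show f (k - 1) + i + 1 - f (k - 1) = i + 1 by omega]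
    refine sum_congr rfl fun t ht => ?_
    rw [mem_range] at ht
    rw [show f (k - 1) + t + (i - t) = f (k - 1) + i by omega]
  · rw [sum_Ico_eq_sum_range, Nat.add_sub_cancel_left]
    refine sum_congr rfl fun t ht => ?_
    rw [mem_range] at ht
    rw [show f (k - 1) + t + (i - 1 - t) = f (k - 1) + i - 1 by omega]

theorem columnRuns_down (w : List DyckStep) (k : ℤ) (f : ℤ → ℕ) (t i : ℕ) :
    columnRuns (.D :: w) (k + 1) (constFrom k (f (k - 1) + t) f) i =
      addShift (columnRuns w k f) (t + i) := by
  simp only [columnRuns, runCount, sum_columnStep_down, addShift_apply, add_sub_cancel_right,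
    constFrom_of_le le_rfl, constFrom_constFrom_of_le le_rfl,
    constFrom_constFrom_of_le (lt_add_one k).le, add_assoc]

end Automaton

section Hook

@[elab_as_elim]
theorem dyckWord_induction {motive : DyckWord → Prop} (zero : motive 0)
    (nest_add : ∀ p q : DyckWord, motive p → motive q → motive (p.nest + q)) (p : DyckWord) :
    motive p := by
  by_cases hp : p = 0
  · rwa [hp]
  · rw [← DyckWord.nest_insidePart_add_outsidePart hp]
    exact nest_add _ _ (dyckWord_induction zero nest_add _) (dyckWord_induction zero nest_add _)
termination_by p.semilength
decreasing_by
  · exact DyckWord.semilength_insidePart_lt hp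
  · exact DyckWord.semilength_outsidePart_lt hp

theorem toList_nest_add (p q : DyckWord) :
    (p.nest + q).toList = .U :: (p.toList ++ .D :: q.toList) := by
  change ([.U] ++ p.toList ++ [.D]) ++ q.toList = _
  simp

/-- The number of up steps of a path starting at height `d`, before its first visit to height
`0`. -/
def ascents : ℕ → List DyckStep → ℕ
  | 0, _ => 0
  | _ + 1, [] => 0
  | d + 1, .U :: w => ascents (d + 2) w + 1
  | d + 1, .D :: w => ascents d w

/-- The product over the up steps of a word of the lengths of their chords. -/
def chordProd : List DyckStep → ℕ
  | [] => 1
  | .U :: w => (ascents 1 w + 1) * chordProd w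
  | .D :: w => chordProd w

theorem ascents_append (p : DyckWord) (d : ℕ) (w : List DyckStep) :
    ascents (d + 1) (p.toList ++ w) = p.semilength + ascents (d + 1) w := by
  induction p using dyckWord_induction generalizing d w with
  | zero => exact (zero_add _).symm
  | nest_add p q ihp ihq =>
    simp only [toList_nest_add, List.cons_append, List.append_assoc, ascents, ihp, ihq,
      DyckWord.semilength_add, DyckWord.semilength_nest]
    ring

theorem chordProd_append (p : DyckWord) (w : List DyckStep) :
    chordProd (p.toList ++ w) = chordProd p.toList * chordProd w := by
  induction p using dyckWord_induction generalizing w with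
  | zero => exact (one_mul _).symm
  | nest_add p q ihp ihq =>
    simp only [toList_nest_add, List.cons_append, List.append_assoc, chordProd, ascents_append,
      ascents, ihp, ihq, mul_assoc]

theorem chordProd_nest_add (p q : DyckWord) :
    chordProd (p.nest + q).toList =
      (p.semilength + 1) * (chordProd p.toList * chordProd q.toList) := by
  simp only [toList_nest_add, chordProd, ascents_append, ascents, chordProd_append, add_zero]

theorem chordProd_mul_addShift_pow_columnRuns (p : DyckWord) (a : ℕ) (w : List DyckStep) (k : ℤ)
    (f : ℤ → ℕ) :
    chordProd p.toList * (addShift ^ a) (columnRuns (p.toList ++ w) k f) 0 =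
      (a + 1).ascFactorial p.semilength *
        (addShift ^ (a + p.semilength)) (columnRuns w k f) 0 := by
  induction p using dyckWord_induction generalizing a w k f with
  | zero => rfl
  | nest_add p q ihp ihq =>
    set m := p.semilength
    set φ := columnRuns (q.toList ++ w) k f
    set X : ℕ → ℕ → ℕ := fun t =>
      columnRuns (p.toList ++ .D :: (q.toList ++ w)) (k + 1) (constFrom k (f (k - 1) + t) f)
    have inner (e t : ℕ) : chordProd p.toList * (addShift ^ e) (X t) 0 =
        (e + 1).ascFactorial m * (addShift ^ (e + m + 1)) φ t := by
      rw [ihp, pow_succ _ (e + m), Module.End.mul_apply,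
        funext (columnRuns_down (q.toList ++ w) k f t), addShift_pow_translate]
      rfl
    have outer {e : ℕ} (he : e ∈ range (a + 1)) :
        chordProd p.toList * (addShift ^ (a - e)) (fun t => (addShift ^ e) (X t) 0) 0 =
          (e + 1).ascFactorial m * (addShift ^ (a + (m + 1))) φ 0 := by
      have hadd : a - e + (e + m + 1) = a + (m + 1) := by
        rw [mem_range] at he
        omega
      rw [← addShift_pow_mul, funext (inner e), addShift_pow_mul, ← Module.End.mul_apply,
        ← pow_add, hadd]
    have summed : (m + 1) * (chordProd p.toList * (addShift ^ a) (upSum X) 0) =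
        (a + 1).ascFactorial (m + 1) * (addShift ^ (a + (m + 1))) φ 0 := by
      rw [addShift_pow_upSum, mul_sum, sum_congr rfl fun e he => outer he, ← sum_mul, ← mul_assoc,
        succ_mul_sum_ascFactorial]
    rw [chordProd_nest_add, toList_nest_add, List.cons_append, List.append_assoc,
      List.cons_append, columnRuns_up, DyckWord.semilength_add, DyckWord.semilength_nest,
      ← Nat.ascFactorial_mul_ascFactorial, ← add_assoc a]
    calc (m + 1) * (chordProd p.toList * chordProd q.toList) * (addShift ^ a) (upSum X) 0
        = chordProd q.toList * ((m + 1) * (chordProd p.toList * (addShift ^ a) (upSum X) 0)) := by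
          ring
      _ = (a + 1).ascFactorial (m + 1) *
            (chordProd q.toList * (addShift ^ (a + (m + 1))) φ 0) := by
          rw [summed]
          ring
      _ = _ := by
          rw [ihq, ← mul_assoc, add_right_comm a]

theorem runCount_mul_chordProd (p : DyckWord) :
    runCount columnStep (0, 0) p.toList (0, 0) * chordProd p.toList = p.semilength.factorial := by
  have columnRuns_nil : columnRuns [] 0 0 = Pi.single 0 1 := by
    funext i
    have : constFrom 0 i 0 = 0 ↔ i = 0 :=
      ⟨fun h => by simpa [constFrom] using congrFun h 0, fun h => by ext; simp [constFrom, h]⟩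
    simp [columnRuns, runCount, this, Pi.single_apply]
  have isFixedPt : addShift (Pi.single 0 1) = Pi.single 0 1 := by
    funext i
    simp [addShift_apply, Pi.single_apply]
  have h := chordProd_mul_addShift_pow_columnRuns p 0 [] 0 0
  rw [columnRuns_nil, Module.End.pow_apply _ (0 + _),
    Function.iterate_fixed isFixedPt, zero_add, Nat.one_ascFactorial, List.append_nil] at h
  have start : constFrom 0 0 0 = 0 := by
    ext
    simp [constFrom]
  simpa [columnRuns, start, mul_comm] using h

end Hook

section Words

theorem card_filter_lt_eq_count_take_ofFn {α : Type*} [DecidableEq α] {N : ℕ} (f : Fin N → α)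
    (a : α) (k : ℕ) : #{i : Fin N | i < k ∧ f i = a} = ((List.ofFn f).take k).count a := by
  induction N generalizing k with
  | zero => simp
  | succ N ih =>
    cases k with
    | zero => simp
    | succ k =>
      rw [card_filter, Fin.sum_univ_succ, List.ofFn_succ, List.take_succ_cons, List.count_cons,
        ← ih, card_filter, add_comm]
      simp

theorem chordProd_ofFn {N : ℕ} (f : Fin N → DyckStep) :
    chordProd (List.ofFn f) =
      ∏ i with f i = .U, (ascents 1 ((List.ofFn f).drop (i + 1)) + 1) := by
  induction N with
  | zero => rfl
  | succ N ih =>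
    rw [prod_filter, Fin.prod_univ_succ, List.ofFn_succ, ← prod_filter]
    simp only [Fin.val_zero, Fin.val_succ, List.drop_succ_cons, List.drop_zero, ← ih]
    cases f 0 <;> simp [chordProd]

namespace DyckPath

variable {n : ℕ} (P : DyckPath n)

/-- The sequence of steps of a Dyck path. -/
def word : List DyckStep := List.ofFn fun i => if P.step i then .U else .D

theorem length_word : P.word.length = 2 * n := List.length_ofFn

theorem getElem_word {m : ℕ} (hm : m < 2 * n) :
    P.word[m]'(P.length_word ▸ hm) = if P.step ⟨m, hm⟩ then .U else .D := by
  simp [word]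

theorem count_up_take_word (k : ℕ) :
    (P.word.take k).count .U = #{i : Fin (2 * n) | i < k ∧ P.step i = true} := by
  simp [word, ← card_filter_lt_eq_count_take_ofFn]

theorem count_down_take_word (k : ℕ) :
    (P.word.take k).count .D = #{i : Fin (2 * n) | i < k ∧ P.step i = false} := by
  simp [word, ← card_filter_lt_eq_count_take_ofFn]

theorem pt_eq_count_sub_count (k : ℕ) :
    P.pt k = (P.word.take k).count .U - (P.word.take k).count .D := by
  rw [count_up_take_word, count_down_take_word, pt, ht]
  simp only [sub_add_cancel, Nat.cast_lt]

theorem pt_add_one {k : ℕ} (hk : k < 2 * n) :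
    P.pt (k + 1) = P.pt k + if P.step ⟨k, hk⟩ then 1 else -1 := by
  rw [pt, pt, ← P.ht_add_one ⟨k, hk⟩ (sub_add_cancel _ _), Nat.cast_add_one, add_sub_right_comm]

theorem pt_nonneg (k : ℕ) : 0 ≤ P.pt k := P.ht_nonneg _

/-- The sequence of steps of a Dyck path, as a Dyck word. -/
def toDyckWord : DyckWord where
  toList := P.word
  count_U_eq_count_D := by
    have pt_length : P.pt P.word.length = 0 := P.ht_eq_zero (by rw [P.length_word]; omega)
    rw [pt_eq_count_sub_count, List.take_length] at pt_length
    omega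
  count_D_le_count_U k := by
    have := P.pt_nonneg k
    rw [pt_eq_count_sub_count] at this
    omega

theorem semilength_toDyckWord : P.toDyckWord.semilength = n := by
  have := P.toDyckWord.two_mul_semilength_eq_length
  rw [toDyckWord, length_word] at this
  exact Nat.mul_left_cancel two_pos this

theorem take_add_one_word {k : ℕ} (hk : k < 2 * n) :
    P.word.take (k + 1) = P.word.take k ++ [if P.step ⟨k, hk⟩ then .U else .D] := by
  rw [← P.getElem_word hk, List.take_append_getElem]

theorem pt_add (k j : ℕ) : P.pt (k + j) = P.pt k +
    (((P.word.drop k).take j).count .U - ((P.word.drop k).take j).count .D) := by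
  have count_take (a : DyckStep) : (P.word.take (k + j)).count a =
      (P.word.take k).count a + ((P.word.drop k).take j).count a := by
    rw [List.take_add, List.count_append]
  have := P.pt_eq_count_sub_count (k + j)
  rw [pt_eq_count_sub_count, pt_eq_count_sub_count, count_take, count_take]
  push_cast
  ring

end DyckPath

namespace IsChord

variable {n p q : ℕ} {P : DyckPath n}

theorem exists_drop_word_eq (hpq : IsChord P p q) :
    ∃ w : DyckWord, w.toList = (P.word.drop (p + 1)).take (q - (p + 1)) ∧
      P.word.drop (p + 1) = w.toList ++ .D :: P.word.drop (q + 1) := by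
  obtain ⟨hlt, hq, ⟨hp, up⟩, ⟨_, down⟩, pt_succ, pt_lt⟩ := hpq
  have pt_left : P.pt (p + 1) = P.pt p + 1 := by
    rw [P.pt_add_one hp, up, if_pos rfl]
  have pt_right : P.pt (q + 1) = P.pt q - 1 := by
    rw [P.pt_add_one hq, down, if_neg Bool.false_ne_true, sub_eq_add_neg]
  refine ⟨⟨(P.word.drop (p + 1)).take (q - (p + 1)), ?_, fun k => ?_⟩, rfl, ?_⟩
  · have := P.pt_add (p + 1) (q - (p + 1))
    rw [Nat.add_sub_cancel' hlt] at this
    omega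
  · rw [List.take_take]
    have := pt_lt (p + 1 + min k (q - (p + 1))) (by omega) (by omega)
    rw [P.pt_add] at this
    omega
  · have drop_q : P.word.drop q = .D :: P.word.drop (q + 1) := by
      rw [List.drop_eq_getElem_cons (by rwa [P.length_word]), P.getElem_word hq, down]
      rfl
    have := List.take_append_drop (q - (p + 1)) (P.word.drop (p + 1))
    rw [List.drop_drop, Nat.add_sub_cancel' hlt, drop_q] at this
    exact this.symm

theorem card_up_steps (hpq : IsChord P p q) :
    #{m : Fin (2 * n) | p ≤ m ∧ m ≤ q ∧ P.step m = true} =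
      ascents 1 (P.word.drop (p + 1)) + 1 := by
  obtain ⟨w, toList_w, drop_eq⟩ := hpq.exists_drop_word_eq
  obtain ⟨hlt, hq, ⟨hp, up⟩, ⟨_, down⟩, -⟩ := hpq
  have split : (P.word.take (q + 1)).count .U =
      (P.word.take p).count .U + (w.semilength + 1) := by
    have take_q := List.take_add (l := P.word) (i := p + 1) (j := q - (p + 1))
    rw [Nat.add_sub_cancel' hlt, ← toList_w] at take_q
    rw [P.take_add_one_word hq, take_q, P.take_add_one_word hp, up, down, DyckWord.semilength]
    simp
  rw [P.count_up_take_word, P.count_up_take_word] at split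
  have card_sdiff : #{m : Fin (2 * n) | p ≤ m ∧ m ≤ q ∧ P.step m = true} +
      #{i : Fin (2 * n) | i < p ∧ P.step i = true} =
      #{i : Fin (2 * n) | i < q + 1 ∧ P.step i = true} := by
    rw [← card_union_of_disjoint]
    · congr 1
      ext i
      grind
    · exact disjoint_filter.2 fun i _ hi hi' => hi'.1.not_ge hi.1
  rw [drop_eq, ascents_append, ascents, ascents]
  omega

end IsChord

theorem prod_chordLen {n : ℕ} {P : DyckPath n} (C : ChordLabeling P) :
    ∏ i, chordLen C i = chordProd P.word := by
  have l_lt (i : Fin n) : C.l i < 2 * n := (C.chord i).1.trans (C.chord i).2.1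
  let left : Fin n ↪ Fin (2 * n) :=
    ⟨fun i => ⟨C.l i, l_lt i⟩, fun i j h => C.inj (congrArg Fin.val h)⟩
  have map_left : univ.map left = univ.filter fun m => P.step m = true := by
    refine eq_of_subset_of_card_le (fun m hm => ?_) ?_
    · obtain ⟨i, -, rfl⟩ := mem_map.1 hm
      exact (mem_filter_univ _).2 (C.chord i).2.2.1.2
    · rw [card_map, card_univ, Fintype.card_fin, P.balanced]
  have up_iff (m : Fin (2 * n)) :
      (if P.step m then DyckStep.U else DyckStep.D) = .U ↔ P.step m = true := by
    simp
  rw [DyckPath.word, chordProd_ofFn]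
  simp only [up_iff, ← map_left, prod_map]
  exact prod_congr rfl fun i _ => (C.chord i).card_up_steps

end Words

section Runs

variable {α σ : Type*} {δ : α → σ → Finset σ} {R S : σ} {w : List α} {s : ℕ → σ}

/-- `s` is a run on the word `w`, from the state `S` to the state `R`, of the nondeterministic
automaton with transitions `δ`. The sequence `s` stays at `R` after the end of the word, so that it
is determined by the states visited. -/
structure IsRun (δ : α → σ → Finset σ) (R : σ) (w : List α) (S : σ) (s : ℕ → σ) : Prop where
  start : s 0 = S
  step : ∀ p (hp : p < w.length), s (p + 1) ∈ δ w[p] (s p)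
  ends : ∀ p, w.length ≤ p → s p = R

theorem isRun_nil_iff : IsRun δ R [] S s ↔ S = R ∧ s = fun _ => R := by
  constructor
  · intro run
    exact ⟨run.start.symm.trans (run.ends 0 le_rfl), funext fun p => run.ends p p.zero_le⟩
  · rintro ⟨rfl, rfl⟩
    exact ⟨rfl, by simp, fun _ _ => rfl⟩

theorem isRun_cons_iff {a : α} :
    IsRun δ R (a :: w) S s ↔ s 0 = S ∧ s 1 ∈ δ a S ∧ IsRun δ R w (s 1) fun p => s (p + 1) := by
  constructor
  · intro run
    have first_step := run.step 0 (by simp)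
    rw [run.start] at first_step
    exact ⟨run.start, first_step, rfl, fun p hp => run.step (p + 1) (by simpa using hp),
      fun p hp => run.ends (p + 1) (by simpa using hp)⟩
  · rintro ⟨rfl, first_step, run⟩
    refine ⟨rfl, ?_, ?_⟩
    · rintro (_ | p) hp
      · exact first_step
      · exact run.step p (by simpa using hp)
    · rintro (_ | p) hp
      · simp at hp
      · exact run.ends p (by simpa using hp)

/-- The decomposition of the runs on a nonempty word according to the state after one step. -/
def runConsEquiv (δ : α → σ → Finset σ) (R : σ) (a : α) (w : List α) (S : σ) :
    {s // IsRun δ R (a :: w) S s} ≃ Σ S' : δ a S, {s // IsRun δ R w S'.1 s} where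
  toFun s := ⟨⟨s.1 1, (isRun_cons_iff.mp s.2).2.1⟩, fun p => s.1 (p + 1),
    (isRun_cons_iff.mp s.2).2.2⟩
  invFun c := ⟨fun p => Nat.casesOn p S c.2.1, isRun_cons_iff.mpr
    ⟨rfl, by simp [c.2.2.start], by simpa [c.2.2.start] using c.2.2⟩⟩
  left_inv s := by
    refine Subtype.ext (funext fun p => ?_)
    cases p with
    | zero => exact s.2.start.symm
    | succ p => rfl
  right_inv := by
    rintro ⟨⟨S', hS'⟩, s, hs⟩
    obtain rfl := hs.start
    rfl

theorem finite_runs (δ : α → σ → Finset σ) (R : σ) (w : List α) (S : σ) :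
    Finite {s // IsRun δ R w S s} := by
  induction w generalizing S with
  | nil =>
    have : Subsingleton {s // IsRun δ R [] S s} :=
      ⟨fun s t => Subtype.ext ((isRun_nil_iff.mp s.2).2.trans (isRun_nil_iff.mp t.2).2.symm)⟩
    infer_instance
  | cons a w ih =>
    have (S' : δ a S) := ih S'.1
    exact Finite.of_equiv _ (runConsEquiv δ R a w S).symm

theorem card_runs (δ : α → σ → Finset σ) (R : σ) (w : List α) (S : σ) :
    Nat.card {s // IsRun δ R w S s} = runCount δ R w S := by
  induction w generalizing S with
  | nil =>
    simp only [isRun_nil_iff, runCount]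
    split_ifs with h <;> simp [h]
  | cons a w ih =>
    have (S' : δ a S) := finite_runs δ R w S'.1
    rw [Nat.card_congr (runConsEquiv δ R a w S), Nat.card_sigma, runCount,
      ← sum_coe_sort (δ a S) (runCount δ R w)]
    exact Fintype.sum_congr _ _ fun S' => ih S'.1

end Runs

section Columns

variable {k : ℤ} {f g : ℤ → ℕ}

/-- The functions `f` that count tiles over a column by base height: `f h` is the number of tiles
over the column whose base has height at most `h`, for a column over which the lower path has
height `k`. -/
structure IsColumn (k : ℤ) (f : ℤ → ℕ) : Prop where
  mono : Monotone f
  eq_zero : ∀ h < 0, f h = 0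
  eq_top : ∀ h, k ≤ h → f h = f k

/-- The passage from the column `f` to the next column `g` over an up step of the lower path
starting at height `k`. -/
structure UpStep (k : ℤ) (f g : ℤ → ℕ) : Prop where
  agree : ∀ h < k, g h = f h
  le : g k ≤ f k
  top : g (k + 1) = f k ∨ g (k + 1) + 1 = f k

/-- The passage from the column `f` to the next column `g` over a down step of the lower path
ending at height `k`. -/
structure DownStep (k : ℤ) (f g : ℤ → ℕ) : Prop where
  agree : ∀ h < k, g h = f h
  top : g k = f (k + 1) ∨ g k = f (k + 1) + 1

theorem isColumn_zero (k : ℤ) : IsColumn k 0 :=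
  ⟨monotone_const, fun _ _ => rfl, fun _ _ => rfl⟩

theorem IsColumn.eq_constFrom (hg : IsColumn k g) (agree : ∀ h < k, g h = f h) :
    g = constFrom k (g k) f := by
  funext h
  grind [constFrom, hg.eq_top h]

theorem IsColumn.isColumn_constFrom {l : ℤ} (hf : IsColumn k f) (hl : 0 ≤ l) {i : ℕ}
    (hi : f (l - 1) ≤ i) : IsColumn l (constFrom l i f) where
  mono a b hab := by
    have mono_ab := hf.mono hab
    have le_pred (h : a < l) : f a ≤ f (l - 1) := hf.mono (by omega)
    grind [constFrom]
  eq_zero h hh := by rw [constFrom_of_lt (hh.trans_le hl), hf.eq_zero h hh]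
  eq_top h hh := by rw [constFrom_of_le hh, constFrom_of_le le_rfl]

theorem isColumn_and_upStep_iff (hk : 0 ≤ k) (hf : IsColumn k f) :
    IsColumn (k + 1) g ∧ UpStep k f g ↔
      ∃ i t, f (k - 1) ≤ t ∧ t ≤ i ∧ (i = f k ∨ i + 1 = f k) ∧
        g = constFrom (k + 1) i (constFrom k t f) := by
  constructor
  · rintro ⟨hg, agree, -, top⟩
    refine ⟨g (k + 1), g k, ?_, hg.mono (by omega), top, hg.eq_constFrom fun h hh => ?_⟩
    · rw [← agree _ (sub_one_lt k)]
      exact hg.mono (by omega)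
    · grind [constFrom]
  · rintro ⟨i, t, le_t, t_le, hi, rfl⟩
    refine ⟨(hf.isColumn_constFrom hk le_t).isColumn_constFrom (by omega) ?_, ?_, ?_, ?_⟩ <;>
      grind [constFrom]

theorem mem_columnStep_up {S : ℤ × (ℤ → ℕ)} (hk : 0 ≤ k) (hf : IsColumn k f) :
    S ∈ columnStep .U (k, f) ↔ S.1 = k + 1 ∧ IsColumn (k + 1) S.2 ∧ UpStep k f S.2 := by
  rw [isColumn_and_upStep_iff hk hf]
  simp only [columnStep, mem_union, mem_image, mem_Icc, mem_Ico, Prod.ext_iff]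
  constructor
  · rintro (⟨t, ⟨le_t, t_le⟩, height, eq⟩ | ⟨t, ⟨le_t, t_lt⟩, height, eq⟩)
    · exact ⟨height.symm, _, t, le_t, t_le, .inl rfl, eq.symm⟩
    · exact ⟨height.symm, _, t, le_t, Nat.le_sub_one_of_lt t_lt, .inr (by omega), eq.symm⟩
  · rintro ⟨height, i, t, le_t, t_le, rfl | hi, eq⟩
    · exact .inl ⟨t, ⟨le_t, t_le⟩, height.symm, eq.symm⟩
    · obtain rfl : i = f k - 1 := by omega
      exact .inr ⟨t, ⟨le_t, by omega⟩, height.symm, eq.symm⟩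

theorem mem_columnStep_down {S : ℤ × (ℤ → ℕ)} (hk : 0 ≤ k) (hf : IsColumn (k + 1) f) :
    S ∈ columnStep .D (k + 1, f) ↔ S.1 = k ∧ IsColumn k S.2 ∧ DownStep k f S.2 := by
  obtain ⟨k', g⟩ := S
  have le_top : f (k - 1) ≤ f (k + 1) := hf.mono (by omega)
  simp only [columnStep, add_sub_cancel_right, mem_insert, mem_singleton, Prod.mk.injEq]
  constructor
  · rintro (⟨rfl, rfl⟩ | ⟨rfl, rfl⟩)
    · exact ⟨rfl, hf.isColumn_constFrom hk le_top, fun h hh => constFrom_of_lt hh _ _,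
        .inl (constFrom_of_le le_rfl _ _)⟩
    · exact ⟨rfl, hf.isColumn_constFrom hk (by omega), fun h hh => constFrom_of_lt hh _ _,
        .inr (constFrom_of_le le_rfl _ _)⟩
  · rintro ⟨rfl, hg, agree, top | top⟩
    · exact .inl ⟨rfl, top ▸ hg.eq_constFrom agree⟩
    · exact .inr ⟨rfl, top ▸ hg.eq_constFrom agree⟩

end Columns

section Profiles

variable {n : ℕ} {P : DyckPath n} {F : ℤ → ℤ → ℕ}

/-- The profiles over the lower path `P`, a local description of the functions `F` for which `F x h`
is the number of tiles of a cover-inclusive Dyck tiling over column `x` whose base has height at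
most `h`. -/
structure IsProfile (P : DyckPath n) (F : ℤ → ℤ → ℕ) : Prop where
  isColumn : ∀ x, IsColumn (P.ht x) (F x)
  outside : ∀ x : ℤ, x ≤ -n ∨ n ≤ x → F x = 0
  up : ∀ x, P.ht (x + 1) = P.ht x + 1 → UpStep (P.ht x) (F x) (F (x + 1))
  down : ∀ x, P.ht x = P.ht (x + 1) + 1 → DownStep (P.ht (x + 1)) (F x) (F (x + 1))

theorem mem_columnStep_word_iff {p : ℕ} (hp : p < P.word.length) {x : ℤ} (hx : x + n = p)
    {f : ℤ → ℕ} (hf : IsColumn (P.ht x) f) {S : ℤ × (ℤ → ℕ)} :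
    S ∈ columnStep P.word[p] (P.ht x, f) ↔
      S.1 = P.ht (x + 1) ∧ IsColumn (P.ht (x + 1)) S.2 ∧
        (P.ht (x + 1) = P.ht x + 1 → UpStep (P.ht x) f S.2) ∧
        (P.ht x = P.ht (x + 1) + 1 → DownStep (P.ht (x + 1)) f S.2) := by
  have hp' : p < 2 * n := by rwa [P.length_word] at hp
  have ht_add_one := P.ht_add_one ⟨p, hp'⟩ hx
  rw [P.getElem_word hp']
  split_ifs with hs
  · rw [if_pos hs] at ht_add_one
    have no_down : P.ht x ≠ P.ht x + 1 + 1 := by omega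
    simp only [mem_columnStep_up (P.ht_nonneg x) hf, ht_add_one, no_down, true_imp_iff,
      false_imp_iff, and_true]
  · rw [if_neg hs] at ht_add_one
    have ht_eq : P.ht x = P.ht (x + 1) + 1 := by omega
    have no_up : P.ht (x + 1) ≠ P.ht (x + 1) + 1 + 1 := by omega
    rw [ht_eq] at hf
    simp only [ht_eq, mem_columnStep_down (P.ht_nonneg _) hf, no_up, true_imp_iff,
      false_imp_iff, true_and]

/-- The run of `columnStep` that visits the columns of `F` from left to right. -/
def profileRun (P : DyckPath n) (F : ℤ → ℤ → ℕ) (p : ℕ) : ℤ × (ℤ → ℕ) := (P.ht (p - n), F (p - n))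

theorem IsProfile.isRun (hF : IsProfile P F) :
    IsRun columnStep (0, 0) P.word (0, 0) (profileRun P F) where
  start := by simp [profileRun, P.ht_eq_zero, hF.outside]
  step p hp := by
    have next : ((p + 1 : ℕ) : ℤ) - n = p - n + 1 := by push_cast; ring
    simp only [profileRun, next]
    rw [mem_columnStep_word_iff hp (by ring) (hF.isColumn _)]
    exact ⟨rfl, hF.isColumn _, hF.up _, hF.down _⟩
  ends p hp := by
    rw [P.length_word] at hp
    rw [profileRun, P.ht_eq_zero (by omega), hF.outside _ (by omega)]

theorem IsRun.fst_eq_and_isColumn {s : ℕ → ℤ × (ℤ → ℕ)}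
    (hs : IsRun columnStep (0, 0) P.word (0, 0) s) (p : ℕ) :
    (s p).1 = P.ht (p - n) ∧ IsColumn (P.ht (p - n)) (s p).2 := by
  induction p with
  | zero =>
    rw [hs.start]
    exact ⟨(P.ht_eq_zero (by simp)).symm, isColumn_zero _⟩
  | succ p ih =>
    have next : ((p + 1 : ℕ) : ℤ) - n = p - n + 1 := by push_cast; ring
    rw [next]
    by_cases hp : p < P.word.length
    · have step := hs.step p hp
      rw [show s p = (P.ht (p - n), (s p).2) from Prod.ext ih.1 rfl,
        mem_columnStep_word_iff hp (by ring) ih.2] at step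
      exact ⟨step.1, step.2.1⟩
    · rw [hs.ends (p + 1) (by omega)]
      rw [P.length_word] at hp
      exact ⟨(P.ht_eq_zero (by omega)).symm, isColumn_zero _⟩

/-- The columns visited by the run `s`, extended by `0` to the left of the path. -/
def runProfile (n : ℕ) (s : ℕ → ℤ × (ℤ → ℕ)) (x : ℤ) : ℤ → ℕ := (s (x + n).toNat).2

theorem IsRun.isProfile {s : ℕ → ℤ × (ℤ → ℕ)}
    (hs : IsRun columnStep (0, 0) P.word (0, 0) s) : IsProfile P (runProfile n s) := by
  have state (x : ℤ) (hx : -n ≤ x) : (s (x + n).toNat).1 = P.ht x ∧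
      IsColumn (P.ht x) (runProfile n s x) := by
    simpa only [runProfile, show ((x + n).toNat : ℤ) - n = x by omega] using
      hs.fst_eq_and_isColumn (x + n).toNat
  have outside (x : ℤ) (hx : x ≤ -n ∨ n ≤ x) : runProfile n s x = 0 := by
    rcases hx with hx | hx
    · rw [runProfile, show (x + n).toNat = 0 by omega, hs.start]
    · rw [runProfile, hs.ends _ (by rw [P.length_word]; omega)]
  have step (x : ℤ) (hx : P.ht (x + 1) ≠ P.ht x) :
      (P.ht (x + 1) = P.ht x + 1 → UpStep (P.ht x) (runProfile n s x) (runProfile n s (x + 1))) ∧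
        (P.ht x = P.ht (x + 1) + 1 →
          DownStep (P.ht (x + 1)) (runProfile n s x) (runProfile n s (x + 1))) := by
    obtain ⟨h₁, h₂⟩ := P.mem_Ico_of_ht_ne hx
    have hp : (x + n).toNat < P.word.length := by rw [P.length_word]; omega
    have transition := hs.step _ hp
    rw [show s (x + n).toNat = (P.ht x, runProfile n s x) from Prod.ext (state x h₁).1 rfl,
      mem_columnStep_word_iff hp (by omega) (state x h₁).2,
      show (x + n).toNat + 1 = (x + 1 + n).toNat by omega] at transition
    exact transition.2.2
  refine ⟨fun x => ?_, outside, fun x hx => (step x (by omega)).1 hx,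
    fun x hx => (step x (by omega)).2 hx⟩
  rcases le_total (-(n : ℤ)) x with hx | hx
  · exact (state x hx).2
  · rw [outside x (.inl hx)]
    exact isColumn_zero _

/-- The profiles over a path are the runs of `columnStep` on its word. -/
def profileEquivRun (P : DyckPath n) :
    {F // IsProfile P F} ≃ {s // IsRun columnStep (0, 0) P.word (0, 0) s} where
  toFun F := ⟨profileRun P F, F.2.isRun⟩
  invFun s := ⟨runProfile n s, s.2.isProfile⟩
  left_inv F := by
    refine Subtype.ext (funext fun x => ?_)
    rcases le_total (-(n : ℤ)) x with hx | hx
    · simp only [runProfile, profileRun, show ((x + n).toNat : ℤ) - n = x by omega]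
    · simp only [runProfile, profileRun, F.2.outside x (.inl hx)]
      exact F.2.outside _ (by omega)
  right_inv s := by
    refine Subtype.ext (funext fun p => Prod.ext (s.2.fst_eq_and_isColumn p).1.symm ?_)
    simp [profileRun, runProfile]

theorem card_profiles (P : DyckPath n) :
    Nat.card {F // IsProfile P F} = runCount columnStep (0, 0) P.word (0, 0) := by
  rw [Nat.card_congr (profileEquivRun P), card_runs]

end Profiles

section Tiles

variable {n : ℕ}

theorem mem_skewCells {P Q : DyckPath n} {x z : ℤ} :
    (x, z) ∈ skewCells P Q ↔
      -(n : ℤ) < x ∧ x < n ∧ ∃ l : ℕ, z = P.ht x + 2 * l ∧ z + 2 ≤ Q.ht x := by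
  have lower_nonneg := P.ht_nonneg x
  simp only [skewCells, mem_filter, mem_product, mem_Icc]
  constructor
  · rintro ⟨⟨⟨h₁, h₂⟩, -, -⟩, lower_le, le_upper, parity⟩
    have lower_parity := P.ht_parity h₁ h₂
    have inside : ¬ (x ≤ -n ∨ n ≤ x) := fun outside => by
      rw [Q.ht_eq_zero outside] at le_upper
      omega
    exact ⟨by omega, by omega, ((z - P.ht x) / 2).toNat, by omega, le_upper⟩
  · rintro ⟨h₁, h₂, l, hz, le_upper⟩
    have lower_parity := P.ht_parity h₁.le h₂.le
    have upper_le := Q.ht_le x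
    exact ⟨⟨⟨h₁.le, h₂.le⟩, by omega, by omega⟩, by omega, le_upper, by omega⟩

theorem IsDyckTile.eq_of_fst_eq {t : Finset (ℤ × ℤ)} (ht : IsDyckTile t) {x z w : ℤ}
    (hz : (x, z) ∈ t) (hw : (x, w) ∈ t) : z = w := by
  obtain ⟨a, b, f, -, -, -, -, rfl⟩ := ht
  simp only [mem_image, Prod.mk.injEq] at hz hw
  obtain ⟨_, -, rfl, rfl⟩ := hz
  obtain ⟨_, -, rfl, rfl⟩ := hw
  rfl

theorem IsDyckTile.adjacent {t : Finset (ℤ × ℤ)} (ht : IsDyckTile t) {x y z w : ℤ}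
    (hz : (x, z) ∈ t) (hw : (y, w) ∈ t) (hxy : y = x + 1 ∨ y = x - 1) :
    w = z + 1 ∨ w = z - 1 := by
  obtain ⟨a, b, f, -, step, -, -, rfl⟩ := ht
  simp only [mem_image, mem_Icc, Prod.mk.injEq] at hz hw
  obtain ⟨x, hx, rfl, rfl⟩ := hz
  obtain ⟨y, hy, rfl, rfl⟩ := hw
  rcases hxy with rfl | rfl
  · exact step x hx.1 (by omega)
  · have := step (x - 1) hy.1 (by omega)
    rw [sub_add_cancel] at this
    omega

/-- The box over column `x` at level `l` above the path `P`, recorded by its bottom corner. -/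
def DyckPath.box (P : DyckPath n) (l : ℕ) (x : ℤ) : ℤ × ℤ := (x, P.ht x + 2 * l)

/-- The boxes over the columns `a, …, b` at level `l` above the path `P`. -/
def DyckPath.strip (P : DyckPath n) (l : ℕ) (a b : ℤ) : Finset (ℤ × ℤ) := (Icc a b).image (P.box l)

variable {P : DyckPath n} {a b x : ℤ} {l m : ℕ}

theorem mem_strip {c : ℤ × ℤ} : c ∈ P.strip l a b ↔ a ≤ c.1 ∧ c.1 ≤ b ∧ c = P.box l c.1 := by
  rw [DyckPath.strip, mem_image]
  constructor
  · rintro ⟨x, hx, rfl⟩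
    exact ⟨(mem_Icc.mp hx).1, (mem_Icc.mp hx).2, rfl⟩
  · rintro ⟨le, le', hc⟩
    exact ⟨c.1, mem_Icc.mpr ⟨le, le'⟩, hc.symm⟩

theorem box_injective (P : DyckPath n) (x : ℤ) : Function.Injective fun l => P.box l x := by
  intro l m h
  simpa [DyckPath.box] using h

theorem box_mem_strip : P.box m x ∈ P.strip l a b ↔ a ≤ x ∧ x ≤ b ∧ m = l := by
  rw [mem_strip, ← (box_injective P x).eq_iff]
  rfl

theorem isDyckTile_strip (ha : -n ≤ a) (hb : b ≤ n) (hab : a ≤ b)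
    (ht_left_le : ∀ x, a ≤ x → x ≤ b → P.ht a ≤ P.ht x)
    (ht_right_le : ∀ x, a ≤ x → x ≤ b → P.ht b ≤ P.ht x) : IsDyckTile (P.strip l a b) := by
  refine ⟨a, b, fun x => P.ht x + 2 * l, hab, fun x hx hx' => ?_, ?_, fun x hx hx' => ?_, rfl⟩
  · have := P.ht_add_one_eq_or (x := x) (by omega) (by omega)
    simp only
    omega
  · simp only [(ht_left_le b hab le_rfl).antisymm (ht_right_le a le_rfl hab)]
  · exact add_le_add_left (ht_left_le x hx hx') _

end Tiles

namespace DyckTiling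

variable {n : ℕ} {T : DyckTiling n} {t u : Finset (ℤ × ℤ)} {x y h : ℤ} {l m : ℕ}

theorem exists_eq_box (ht : t ∈ T.tiles) {z : ℤ} (hz : (x, z) ∈ t) :
    ∃ l, (x, z) = T.lower.box l x := by
  have mem_skew : (x, z) ∈ skewCells T.lower T.upper := T.cover ▸ mem_biUnion.mpr ⟨t, ht, hz⟩
  obtain ⟨-, -, l, rfl, -⟩ := mem_skewCells.mp mem_skew
  exact ⟨l, rfl⟩

theorem exists_box_mem_iff : (∃ t ∈ T.tiles, T.lower.box l x ∈ t) ↔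
    -(n : ℤ) < x ∧ x < n ∧ T.lower.ht x + 2 * l + 2 ≤ T.upper.ht x := by
  have mem_cover : (∃ t ∈ T.tiles, T.lower.box l x ∈ t) ↔
      T.lower.box l x ∈ skewCells T.lower T.upper := by
    rw [← T.cover, mem_biUnion]
    rfl
  rw [mem_cover, DyckPath.box, mem_skewCells]
  refine and_congr_right fun _ => and_congr_right fun _ => ⟨?_, fun le => ⟨l, rfl, le⟩⟩
  rintro ⟨_, -, le⟩
  exact le

theorem eq_of_mem_of_mem (ht : t ∈ T.tiles) (hu : u ∈ T.tiles) {c : ℤ × ℤ} (hct : c ∈ t)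
    (hcu : c ∈ u) : t = u := by
  by_contra hne
  exact disjoint_left.mp (T.disj t ht u hu hne) hct hcu

theorem level_eq_of_mem (ht : t ∈ T.tiles) (hl : T.lower.box l x ∈ t)
    (hm : T.lower.box m x ∈ t) : l = m := by
  have := (T.isDyck t ht).eq_of_fst_eq hl hm
  omega

theorem CoverInclusive.exists_tile_below (hT : T.CoverInclusive) (ht : t ∈ T.tiles)
    (hx : T.lower.box (l + 1) x ∈ t) :
    ∃ u ∈ T.tiles, T.lower.box l x ∈ u ∧
      ∀ y m, T.lower.box m y ∈ t → ∃ m', T.lower.box m' y ∈ u := by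
  obtain ⟨h₁, h₂, le_upper⟩ := exists_box_mem_iff.mp ⟨t, ht, hx⟩
  obtain ⟨u, hu, hxu⟩ := (exists_box_mem_iff (T := T) (l := l)).mpr ⟨h₁, h₂, by
    push_cast at le_upper
    omega⟩
  refine ⟨u, hu, hxu, fun y m hy => ?_⟩
  obtain ⟨z, hz⟩ := hT t ht u hu ⟨_, hx, _, hxu, rfl, by simp [DyckPath.box]⟩ _ hy
  obtain ⟨m', hm'⟩ := exists_eq_box hu hz
  exact ⟨m', hm' ▸ hz⟩

theorem CoverInclusive.exists_tile_below_of_adjacent (hT : T.CoverInclusive) (ht : t ∈ T.tiles)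
    (hxy : y = x + 1 ∨ y = x - 1) (hx : T.lower.box l x ∈ t) (hy : T.lower.box (l + 1) y ∈ t) :
    ∃ m, l = m + 1 ∧ ∃ u ∈ T.tiles, T.lower.box m x ∈ u ∧ T.lower.box (m + 1) y ∈ u := by
  obtain ⟨h₁, h₂, -⟩ := exists_box_mem_iff.mp ⟨t, ht, hx⟩
  have lower_step := T.lower.ht_adjacent h₁ h₂ hxy
  obtain ⟨u, hu, hyu, exists_mem⟩ := hT.exists_tile_below ht hy
  obtain ⟨m, hxu⟩ := exists_mem x l hx
  have step_t := (T.isDyck t ht).adjacent hx hy hxy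
  have step_u := (T.isDyck u hu).adjacent hxu hyu hxy
  have m_ne : m ≠ l := by
    rintro rfl
    obtain rfl := eq_of_mem_of_mem ht hu hx hxu
    have := level_eq_of_mem ht hy hyu
    omega
  obtain rfl : l = m + 1 := by push_cast at step_t; omega
  exact ⟨m, rfl, u, hu, hxu, hyu⟩

theorem CoverInclusive.level_ne_of_adjacent (hT : T.CoverInclusive) (ht : t ∈ T.tiles)
    (hxy : y = x + 1 ∨ y = x - 1) (hx : T.lower.box l x ∈ t) : T.lower.box (l + 1) y ∉ t := by
  intro hy
  induction l generalizing t with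
  | zero =>
    obtain ⟨m, hm, -⟩ := hT.exists_tile_below_of_adjacent ht hxy hx hy
    omega
  | succ l ih =>
    obtain ⟨m, hm, u, hu, hxu, hyu⟩ := hT.exists_tile_below_of_adjacent ht hxy hx hy
    obtain rfl : l = m := by omega
    exact ih hu hxu hyu

theorem CoverInclusive.level_eq_of_adjacent (hT : T.CoverInclusive) (ht : t ∈ T.tiles)
    (hx : T.lower.box l x ∈ t) (hy : T.lower.box m (x + 1) ∈ t) : m = l := by
  obtain ⟨h₁, h₂, -⟩ := exists_box_mem_iff.mp ⟨t, ht, hx⟩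
  have lower_step := T.lower.ht_add_one_eq_or h₁.le h₂
  have tile_step := (T.isDyck t ht).adjacent hx hy (.inl rfl)
  have ne_succ : m ≠ l + 1 := by
    rintro rfl
    exact hT.level_ne_of_adjacent ht (.inl rfl) hx hy
  have succ_ne : l ≠ m + 1 := by
    rintro rfl
    exact hT.level_ne_of_adjacent ht (.inr (add_sub_cancel_right x 1).symm) hy hx
  omega

theorem CoverInclusive.exists_eq_strip (hT : T.CoverInclusive) (ht : t ∈ T.tiles) :
    ∃ a b l, a ≤ b ∧ (∀ x, a ≤ x → x ≤ b → T.lower.ht a ≤ T.lower.ht x ∧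
      T.lower.ht b ≤ T.lower.ht x) ∧ t = T.lower.strip l a b := by
  obtain ⟨a, b, f, hab, -, hfb, le_f, ht_eq⟩ := T.isDyck t ht
  have mem (x) (hx : a ≤ x) (hx' : x ≤ b) : (x, f x) ∈ t :=
    ht_eq ▸ mem_image_of_mem _ (mem_Icc.mpr ⟨hx, hx'⟩)
  obtain ⟨l, hl⟩ := exists_eq_box ht (mem a le_rfl hab)
  have eq_box (x) (hx : a ≤ x) (hx' : x ≤ b) : (x, f x) = T.lower.box l x := by
    induction x, hx using Int.leInduction with
    | base => exact hl
    | succ x hx ih =>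
      have mem_x := mem x hx (by omega)
      have mem_succ := mem (x + 1) (by omega) hx'
      obtain ⟨m, hm⟩ := exists_eq_box ht mem_succ
      rw [ih (by omega)] at mem_x
      rw [hm] at mem_succ ⊢
      rw [hT.level_eq_of_adjacent ht mem_x mem_succ]
  have f_eq (x) (hx : a ≤ x) (hx' : x ≤ b) : f x = T.lower.ht x + 2 * l :=
    congrArg Prod.snd (eq_box x hx hx')
  refine ⟨a, b, l, hab, fun x hx hx' => ?_, ht_eq.trans (image_congr fun x hx => ?_)⟩
  · have := le_f x hx hx'
    rw [← hfb, f_eq b hab le_rfl, f_eq x hx hx'] at this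
    have := le_f x hx hx'
    rw [f_eq a le_rfl hab, f_eq x hx hx'] at this
    omega
  · rw [mem_coe, mem_Icc] at hx
    exact eq_box x hx.1 hx.2

/-- The box over column `x` at level `l` lies in a tile whose base has height at most `h`, where
heights are those of the lower path below the tile. -/
def InTileBelow (T : DyckTiling n) (x h : ℤ) (l : ℕ) : Prop :=
  ∃ t ∈ T.tiles, T.lower.box l x ∈ t ∧ ∃ y, T.lower.ht y ≤ h ∧ T.lower.box l y ∈ t

theorem InTileBelow.pred (hT : T.CoverInclusive) (hl : T.InTileBelow x h (l + 1)) :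
    T.InTileBelow x h l := by
  obtain ⟨t, ht, hx, y, hy, hyt⟩ := hl
  obtain ⟨u, hu, hxu, exists_mem⟩ := hT.exists_tile_below ht hx
  obtain ⟨m, hyu⟩ := exists_mem y _ hyt
  obtain ⟨a, b, k, -, -, rfl⟩ := hT.exists_eq_strip hu
  obtain rfl : m = l := (box_mem_strip.mp hyu).2.2.trans (box_mem_strip.mp hxu).2.2.symm
  exact ⟨_, hu, hxu, y, hy, hyu⟩

theorem inTileBelow_iff_of_ht_le (hh : T.lower.ht x ≤ h) :
    T.InTileBelow x h l ↔
      -(n : ℤ) < x ∧ x < n ∧ T.lower.ht x + 2 * l + 2 ≤ T.upper.ht x := by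
  rw [← exists_box_mem_iff]
  exact ⟨fun ⟨t, ht, hx, _⟩ => ⟨t, ht, hx⟩, fun ⟨t, ht, hx⟩ => ⟨t, ht, hx, x, hh, hx⟩⟩

theorem InTileBelow.exists_tile_adjacent (hT : T.CoverInclusive) (hl : T.InTileBelow x h l)
    (hxy : y = x + 1 ∨ y = x - 1) (hx : h < T.lower.ht x) :
    ∃ t ∈ T.tiles, T.lower.box l x ∈ t ∧ T.lower.box l y ∈ t ∧
      ∃ w, T.lower.ht w ≤ h ∧ T.lower.box l w ∈ t := by
  obtain ⟨t, ht, hxt, w, hw, hwt⟩ := hl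
  obtain ⟨a, b, k, -, ends_le, rfl⟩ := hT.exists_eq_strip ht
  refine ⟨_, ht, hxt, ?_, w, hw, hwt⟩
  rw [box_mem_strip] at hxt hwt ⊢
  have ends_le := ends_le w hwt.1 hwt.2.1
  have ne_left : x ≠ a := by rintro rfl; omega
  have ne_right : x ≠ b := by rintro rfl; omega
  omega

theorem InTileBelow.adjacent (hT : T.CoverInclusive) (hl : T.InTileBelow x h l)
    (hxy : y = x + 1 ∨ y = x - 1) (hx : h < T.lower.ht x) : T.InTileBelow y h l := by
  obtain ⟨t, ht, -, hy, base⟩ := hl.exists_tile_adjacent hT hxy hx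
  exact ⟨t, ht, hy, base⟩

/-- The profile of a cover-inclusive Dyck tiling: the number of tiles over column `x` whose base has
height at most `h`. By cover-inclusiveness these tiles are the lowest ones over the column, so they
are counted by the least level not occupied by them. -/
def profile (T : DyckTiling n) (x h : ℤ) : ℕ := sInf {l | ¬ T.InTileBelow x h l}

theorem CoverInclusive.lt_profile_iff (hT : T.CoverInclusive) :
    l < T.profile x h ↔ T.InTileBelow x h l := by
  have antitone : Antitone (T.InTileBelow x h) :=
    antitone_nat_of_succ_le fun l => InTileBelow.pred hT
  have bounded : ¬ T.InTileBelow x h n := by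
    rintro ⟨t, ht, hx, -⟩
    have := exists_box_mem_iff.mp ⟨t, ht, hx⟩
    have := T.upper.ht_le x
    have := T.lower.ht_nonneg x
    omega
  refine ⟨fun hl => not_not.mp (Nat.notMem_of_lt_sInf hl), fun hl => ?_⟩
  by_contra hle
  exact Nat.sInf_mem (s := {l | ¬ T.InTileBelow x h l}) ⟨n, bounded⟩ (antitone (not_lt.mp hle) hl)

theorem CoverInclusive.profile_le_profile (hT : T.CoverInclusive) {g : ℤ}
    (imp : ∀ l, T.InTileBelow x g l → T.InTileBelow y h l) : T.profile x g ≤ T.profile y h :=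
  le_of_forall_lt fun l hl => hT.lt_profile_iff.mpr (imp l (hT.lt_profile_iff.mp hl))

theorem CoverInclusive.profile_eq_zero (hT : T.CoverInclusive)
    (not_below : ∀ l, ¬ T.InTileBelow x h l) : T.profile x h = 0 :=
  Nat.eq_zero_of_not_pos fun pos => not_below 0 (hT.lt_profile_iff.mp pos)

theorem CoverInclusive.upper_ht (hT : T.CoverInclusive) (x : ℤ) :
    T.upper.ht x = T.lower.ht x + 2 * T.profile x (T.lower.ht x) := by
  have lt_iff (l : ℕ) : l < T.profile x (T.lower.ht x) ↔
      -(n : ℤ) < x ∧ x < n ∧ T.lower.ht x + 2 * l + 2 ≤ T.upper.ht x := by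
    rw [hT.lt_profile_iff, inTileBelow_iff_of_ht_le le_rfl]
  by_cases hx : x ≤ -n ∨ n ≤ x
  · have := lt_iff 0
    rw [T.upper.ht_eq_zero hx, T.lower.ht_eq_zero hx] at *
    omega
  · have below := T.below x
    have lower_parity := T.lower.ht_parity (x := x) (by omega) (by omega)
    have upper_parity := T.upper.ht_parity (x := x) (by omega) (by omega)
    have at_profile := lt_iff (T.profile x (T.lower.ht x))
    have at_pred := lt_iff (T.profile x (T.lower.ht x) - 1)
    omega

theorem CoverInclusive.isColumn_profile (hT : T.CoverInclusive) (x : ℤ) :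
    IsColumn (T.lower.ht x) (T.profile x) where
  mono _ _ hgh := hT.profile_le_profile fun _ ⟨t, ht, hx, y, hy, hyt⟩ =>
    ⟨t, ht, hx, y, hy.trans hgh, hyt⟩
  eq_zero h hh := hT.profile_eq_zero fun _ ⟨_, _, _, y, hy, _⟩ =>
    absurd (T.lower.ht_nonneg y) (by omega)
  eq_top h hh := eq_of_forall_lt_iff fun l => by
    rw [hT.lt_profile_iff, hT.lt_profile_iff, inTileBelow_iff_of_ht_le hh,
      inTileBelow_iff_of_ht_le le_rfl]

theorem CoverInclusive.profile_add_one (hT : T.CoverInclusive) (hx : h < T.lower.ht x)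
    (hx' : h < T.lower.ht (x + 1)) : T.profile (x + 1) h = T.profile x h :=
  le_antisymm
    (hT.profile_le_profile fun _ hl => hl.adjacent hT (.inr (add_sub_cancel_right x 1).symm) hx')
    (hT.profile_le_profile fun _ hl => hl.adjacent hT (.inl rfl) hx)

theorem CoverInclusive.isProfile (hT : T.CoverInclusive) : IsProfile T.lower T.profile where
  isColumn := hT.isColumn_profile
  outside x hx := funext fun h => hT.profile_eq_zero fun l ⟨t, ht, hxt, _⟩ => by
    have := exists_box_mem_iff.mp ⟨t, ht, hxt⟩
    omega
  up x up := by
    obtain ⟨h₁, h₂⟩ := T.lower.mem_Ico_of_ht_ne (x := x) (by omega)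
    refine ⟨fun h hh => hT.profile_add_one hh (by omega), hT.profile_le_profile fun l hl =>
      hl.adjacent hT (.inr (add_sub_cancel_right x 1).symm) (by omega), ?_⟩
    have upper_step := T.upper.ht_add_one_eq_or h₁ h₂
    rw [hT.upper_ht, hT.upper_ht, up] at upper_step
    omega
  down x down := by
    obtain ⟨h₁, h₂⟩ := T.lower.mem_Ico_of_ht_ne (x := x) (by omega)
    refine ⟨fun h hh => hT.profile_add_one (by omega) hh, ?_⟩
    have upper_step := T.upper.ht_add_one_eq_or h₁ h₂
    rw [hT.upper_ht, hT.upper_ht, down] at upper_step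
    omega

end DyckTiling

section Blocks

variable {n : ℕ} {P : DyckPath n} {F : ℤ → ℤ → ℕ} {l m : ℕ} {a b c d x h : ℤ}

/-- The profile `F` puts the boxes over the columns `z` and `z + 1` at level `l` into one tile. -/
def Link (P : DyckPath n) (F : ℤ → ℤ → ℕ) (l : ℕ) (z : ℤ) : Prop :=
  l < F z (min (P.ht z) (P.ht (z + 1))) ∧ l < F (z + 1) (min (P.ht z) (P.ht (z + 1)))

/-- The interval `[a, b]` of columns is a maximal one that is linked at level `l`; these are the
extents of the tiles of the tiling with profile `F`. -/
structure IsBlock (P : DyckPath n) (F : ℤ → ℤ → ℕ) (l : ℕ) (a b : ℤ) : Prop where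
  le : a ≤ b
  lt : ∀ x, a ≤ x → x ≤ b → l < F x (P.ht x)
  link : ∀ z, a ≤ z → z < b → Link P F l z
  left : ¬ Link P F l (a - 1)
  right : ¬ Link P F l b

theorem IsProfile.mem_Ioo (hF : IsProfile P F) (hl : l < F x h) : -(n : ℤ) < x ∧ x < n := by
  by_contra hx
  rw [hF.outside x (by omega)] at hl
  exact not_lt_zero hl

theorem IsProfile.lt_ht (hF : IsProfile P F) (hl : l < F x h) : l < F x (P.ht x) := by
  rcases le_total h (P.ht x) with hh | hh
  · exact hl.trans_le ((hF.isColumn x).mono hh)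
  · rwa [(hF.isColumn x).eq_top h hh] at hl

theorem IsProfile.agree (hF : IsProfile P F) (hx : h < P.ht x) (hx' : h < P.ht (x + 1)) :
    F (x + 1) h = F x h := by
  by_cases inside : -(n : ℤ) ≤ x ∧ x < n
  · rcases P.ht_add_one_eq_or inside.1 inside.2 with up | down
    · exact (hF.up x up).agree h hx
    · exact (hF.down x (by omega)).agree h hx'
  · rw [hF.outside x (by omega), hF.outside (x + 1) (by omega)]

theorem IsProfile.link_of_lt (hF : IsProfile P F) (hl : l < F x h) (hh : h < P.ht x) :
    Link P F l x := by
  obtain ⟨h₁, h₂⟩ := hF.mem_Ioo hl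
  rcases P.ht_add_one_eq_or h₁.le h₂ with up | down
  · rw [Link, min_eq_left (by omega)]
    refine ⟨hl.trans_le ((hF.isColumn x).mono hh.le), ?_⟩
    rw [← hF.agree hh (by omega)] at hl
    exact hl.trans_le ((hF.isColumn (x + 1)).mono hh.le)
  · rw [Link, min_eq_right (by omega)]
    refine ⟨hl.trans_le ((hF.isColumn x).mono (by omega)), ?_⟩
    have lt_top := hF.lt_ht hl
    have top := (hF.down x (by omega)).top
    rw [show P.ht x = P.ht (x + 1) + 1 by omega] at lt_top
    omega

theorem IsProfile.link_of_lt_add_one (hF : IsProfile P F) (hl : l < F (x + 1) h)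
    (hh : h < P.ht (x + 1)) : Link P F l x := by
  obtain ⟨h₁, h₂⟩ := hF.mem_Ioo hl
  rcases P.ht_add_one_eq_or (x := x) (by omega) (by omega) with up | down
  · have lt_bottom : l < F (x + 1) (P.ht x) :=
      hl.trans_le ((hF.isColumn (x + 1)).mono (by omega))
    rw [Link, min_eq_left (by omega)]
    exact ⟨lt_bottom.trans_le (hF.up x up).le, lt_bottom⟩
  · rw [Link, min_eq_right (by omega)]
    refine ⟨?_, hl.trans_le ((hF.isColumn (x + 1)).mono hh.le)⟩
    rw [hF.agree (by omega) hh] at hl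
    exact hl.trans_le ((hF.isColumn x).mono hh.le)

theorem Link.of_le (hl : Link P F l x) (hm : m ≤ l) : Link P F m x :=
  ⟨hm.trans_lt hl.1, hm.trans_lt hl.2⟩

theorem Link.lt_iff (hF : IsProfile P F) (hl : Link P F l x) (h : ℤ) :
    l < F x h ↔ l < F (x + 1) h := by
  rcases le_or_gt (min (P.ht x) (P.ht (x + 1))) h with hh | hh
  · exact iff_of_true (hl.1.trans_le ((hF.isColumn x).mono hh))
      (hl.2.trans_le ((hF.isColumn (x + 1)).mono hh))
  · rw [lt_min_iff] at hh
    rw [hF.agree hh.1 hh.2]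

theorem IsBlock.lt_iff (hF : IsProfile P F) (hB : IsBlock P F l a b) (h : ℤ) (hx : a ≤ x)
    (hx' : x ≤ b) : l < F x h ↔ l < F a h := by
  induction x, hx using Int.leInduction with
  | base => rfl
  | succ x hx ih => rw [← ih (by omega), (hB.link x hx (by omega)).lt_iff hF]

theorem IsBlock.ht_left_le_of_lt (hF : IsProfile P F) (hB : IsBlock P F l a b)
    (hl : l < F a h) : P.ht a ≤ h := by
  by_contra hh
  rw [← sub_add_cancel a 1] at hl hh
  exact hB.left (hF.link_of_lt_add_one hl (not_le.mp hh))

theorem IsBlock.ht_left_le (hF : IsProfile P F) (hB : IsBlock P F l a b) (hx : a ≤ x)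
    (hx' : x ≤ b) : P.ht a ≤ P.ht x :=
  hB.ht_left_le_of_lt hF ((hB.lt_iff hF _ hx hx').mp (hB.lt x hx hx'))

theorem IsBlock.ht_right_le (hF : IsProfile P F) (hB : IsBlock P F l a b) (hx : a ≤ x)
    (hx' : x ≤ b) : P.ht b ≤ P.ht x := by
  have lt_right : l < F b (P.ht x) :=
    (hB.lt_iff hF _ hB.le le_rfl).mpr ((hB.lt_iff hF _ hx hx').mp (hB.lt x hx hx'))
  by_contra hh
  exact hB.right (hF.link_of_lt lt_right (not_le.mp hh))

theorem IsBlock.mem_Ioo (hF : IsProfile P F) (hB : IsBlock P F l a b) : -(n : ℤ) < a ∧ b < n :=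
  ⟨(hF.mem_Ioo (hB.lt a le_rfl hB.le)).1, (hF.mem_Ioo (hB.lt b hB.le le_rfl)).2⟩

theorem IsBlock.isDyckTile (hF : IsProfile P F) (hB : IsBlock P F l a b) :
    IsDyckTile (P.strip l a b) :=
  isDyckTile_strip (hB.mem_Ioo hF).1.le (hB.mem_Ioo hF).2.le hB.le
    (fun _ => hB.ht_left_le hF) (fun _ => hB.ht_right_le hF)

theorem IsBlock.subset (hB : IsBlock P F l a b) (hC : IsBlock P F m c d) (hm : m ≤ l)
    (ha : a ≤ x) (hb : x ≤ b) (hc : c ≤ x) (hd : x ≤ d) : c ≤ a ∧ b ≤ d := by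
  constructor
  · by_contra hlt
    exact hC.left ((hB.link (c - 1) (by omega) (by omega)).of_le hm)
  · by_contra hlt
    exact hC.right ((hB.link d (by omega) (by omega)).of_le hm)

theorem IsBlock.unique (hB : IsBlock P F l a b) (hC : IsBlock P F l c d)
    (ha : a ≤ x) (hb : x ≤ b) (hc : c ≤ x) (hd : x ≤ d) : a = c ∧ b = d := by
  have := hB.subset hC le_rfl ha hb hc hd
  have := hC.subset hB le_rfl hc hd ha hb
  omega

theorem IsProfile.exists_isBlock (hF : IsProfile P F) (hl : l < F x (P.ht x)) :
    ∃ a b, IsBlock P F l a b ∧ a ≤ x ∧ x ≤ b := by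
  obtain ⟨h₁, h₂⟩ := hF.mem_Ioo hl
  have not_link (z : ℤ) (hz : z ≤ -n ∨ n ≤ z) : ¬ Link P F l z := fun link => by
    have := hF.mem_Ioo link.1
    omega
  obtain ⟨b, ⟨hxb, right⟩, le_of_not_link⟩ := Int.exists_least_of_bdd
    (P := fun z => x ≤ z ∧ ¬ Link P F l z) ⟨x, fun z hz => hz.1⟩ ⟨n, h₂.le, not_link n (by omega)⟩
  obtain ⟨a, ⟨hax, left⟩, ge_of_not_link⟩ := Int.exists_greatest_of_bdd
    (P := fun z => z ≤ x ∧ ¬ Link P F l (z - 1)) ⟨x, fun z hz => hz.1⟩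
    ⟨-n, h₁.le, not_link _ (by omega)⟩
  have link (z : ℤ) (haz : a ≤ z) (hzb : z < b) : Link P F l z := by
    by_contra hz
    rcases le_or_gt x z with hxz | hzx
    · exact hzb.not_ge (le_of_not_link z ⟨hxz, hz⟩)
    · have := ge_of_not_link (z + 1) ⟨hzx, by rwa [add_sub_cancel_right]⟩
      omega
  refine ⟨a, b, ⟨hax.trans hxb, fun y hay hyb => ?_, link, left, right⟩, hax, hxb⟩
  rcases lt_trichotomy y x with hyx | rfl | hxy
  · exact hF.lt_ht (link y hay (by omega)).1
  · exact hl
  · have := (link (y - 1) (by omega) (by omega)).2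
    rw [sub_add_cancel] at this
    exact hF.lt_ht this

end Blocks

namespace IsProfile

variable {n : ℕ} {P : DyckPath n} {F : ℤ → ℤ → ℕ} {t u : Finset (ℤ × ℤ)} {l : ℕ} {x h : ℤ}

theorem exists_upper (hF : IsProfile P F) :
    ∃ Q : DyckPath n, Q.ht = fun x => P.ht x + 2 * F x (P.ht x) := by
  refine DyckPath.exists_ht_eq (fun x hx => ?_) (fun x h₁ h₂ => ?_) fun x => ?_
  · rw [hF.outside x hx, P.ht_eq_zero hx]
    rfl
  · rcases P.ht_add_one_eq_or h₁ h₂ with up | down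
    · have top := (hF.up x up).top
      rw [← up] at top
      omega
    · have top := (hF.down x (by omega)).top
      rw [show P.ht (x + 1) + 1 = P.ht x by omega] at top
      omega
  · have := P.ht_nonneg x
    omega

/-- The upper path of the tiling with profile `F`. -/
def upper (hF : IsProfile P F) : DyckPath n := hF.exists_upper.choose

theorem upper_ht (hF : IsProfile P F) (x : ℤ) : hF.upper.ht x = P.ht x + 2 * F x (P.ht x) :=
  congrFun hF.exists_upper.choose_spec x

open Classical in
/-- The tiles of the tiling with profile `F`: one strip for each block. The ranges for the extent
and for the level are large enough to contain every block, see `mem_tiles`. -/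
def tiles (_ : IsProfile P F) : Finset (Finset (ℤ × ℤ)) :=
  ((Ioo (-(n : ℤ)) n ×ˢ Ioo (-(n : ℤ)) n ×ˢ range n).filter
    fun c => IsBlock P F c.2.2 c.1 c.2.1).image fun c => P.strip c.2.2 c.1 c.2.1

theorem mem_tiles (hF : IsProfile P F) :
    t ∈ hF.tiles ↔ ∃ a b l, IsBlock P F l a b ∧ t = P.strip l a b := by
  simp only [tiles, mem_image, mem_filter, mem_product, Finset.mem_Ioo, mem_range, Prod.exists]
  constructor
  · rintro ⟨a, b, l, ⟨-, hB⟩, rfl⟩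
    exact ⟨a, b, l, hB, rfl⟩
  · rintro ⟨a, b, l, hB, rfl⟩
    have bounds := hB.mem_Ioo hF
    have hab := hB.le
    have level_lt := hB.lt a le_rfl hab
    have upper_le := hF.upper.ht_le a
    have lower_nonneg := P.ht_nonneg a
    rw [hF.upper_ht] at upper_le
    exact ⟨a, b, l, ⟨⟨by omega, by omega, by omega⟩, hB⟩, rfl⟩

theorem exists_mem_tiles_iff (hF : IsProfile P F) :
    (∃ t ∈ hF.tiles, P.box l x ∈ t) ↔ l < F x (P.ht x) := by
  constructor
  · rintro ⟨t, ht, hx⟩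
    obtain ⟨a, b, m, hB, rfl⟩ := hF.mem_tiles.mp ht
    obtain ⟨ha, hb, rfl⟩ := box_mem_strip.mp hx
    exact hB.lt x ha hb
  · intro hl
    obtain ⟨a, b, hB, ha, hb⟩ := hF.exists_isBlock hl
    exact ⟨_, hF.mem_tiles.mpr ⟨a, b, l, hB, rfl⟩, box_mem_strip.mpr ⟨ha, hb, rfl⟩⟩

theorem disjoint_of_mem_tiles (hF : IsProfile P F) (ht : t ∈ hF.tiles) (hu : u ∈ hF.tiles)
    (hne : t ≠ u) : Disjoint t u := by
  obtain ⟨a, b, l, hB, rfl⟩ := hF.mem_tiles.mp ht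
  obtain ⟨c, d, m, hC, rfl⟩ := hF.mem_tiles.mp hu
  refine disjoint_left.mpr fun p hp hp' => hne ?_
  obtain ⟨ha, hb, hp⟩ := mem_strip.mp hp
  rw [hp] at hp'
  obtain ⟨hc, hd, rfl⟩ := box_mem_strip.mp hp'
  obtain ⟨rfl, rfl⟩ := hB.unique hC ha hb hc hd
  rfl

theorem biUnion_tiles (hF : IsProfile P F) : hF.tiles.biUnion id = skewCells P hF.upper := by
  ext ⟨x, z⟩
  simp only [mem_biUnion, id, mem_skewCells]
  constructor
  · rintro ⟨t, ht, hx⟩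
    obtain ⟨a, b, l, -, rfl⟩ := hF.mem_tiles.mp ht
    obtain ⟨-, -, hz⟩ := mem_strip.mp hx
    have hl : l < F x (P.ht x) := hF.exists_mem_tiles_iff.mp ⟨_, ht, hz ▸ hx⟩
    obtain rfl : z = P.ht x + 2 * l := congrArg Prod.snd hz
    refine ⟨(hF.mem_Ioo hl).1, (hF.mem_Ioo hl).2, l, rfl, ?_⟩
    rw [hF.upper_ht]
    omega
  · rintro ⟨-, -, l, rfl, le_upper⟩
    rw [hF.upper_ht] at le_upper
    exact hF.exists_mem_tiles_iff.mpr (by omega)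

/-- The Dyck tiling with a given profile. -/
def tiling (hF : IsProfile P F) : DyckTiling n where
  lower := P
  upper := hF.upper
  below x := by
    rw [hF.upper_ht]
    omega
  tiles := hF.tiles
  isDyck t ht := by
    obtain ⟨a, b, l, hB, rfl⟩ := hF.mem_tiles.mp ht
    exact hB.isDyckTile hF
  disj _ ht _ hu := hF.disjoint_of_mem_tiles ht hu
  cover := hF.biUnion_tiles

theorem coverInclusive_tiling (hF : IsProfile P F) : hF.tiling.CoverInclusive := by
  rintro t ht u hu ⟨p, hp, q, hq, hpq, hlt⟩ r hr
  obtain ⟨a, b, l, hB, rfl⟩ := hF.mem_tiles.mp ht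
  obtain ⟨c, d, m, hC, rfl⟩ := hF.mem_tiles.mp hu
  obtain ⟨hap, hpb, hp⟩ := mem_strip.mp hp
  obtain ⟨hcq, hqd, hq⟩ := mem_strip.mp hq
  obtain ⟨har, hrb, -⟩ := mem_strip.mp hr
  rw [hp, hq] at hlt
  simp only [DyckPath.box, hpq] at hlt
  have := hB.subset hC (by omega) hap hpb (hpq ▸ hcq) (hpq ▸ hqd)
  exact ⟨_, box_mem_strip.mpr ⟨by omega, by omega, rfl⟩⟩

theorem inTileBelow_tiling_iff (hF : IsProfile P F) :
    hF.tiling.InTileBelow x h l ↔ l < F x h := by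
  constructor
  · rintro ⟨t, ht, hx, y, hy, hyt⟩
    obtain ⟨a, b, m, hB, rfl⟩ := hF.mem_tiles.mp ht
    obtain ⟨hax, hxb, rfl⟩ := box_mem_strip.mp hx
    obtain ⟨hay, hyb, -⟩ := box_mem_strip.mp hyt
    rw [hB.lt_iff hF h hax hxb, ← hB.lt_iff hF h hay hyb]
    exact (hB.lt y hay hyb).trans_le ((hF.isColumn y).mono hy)
  · intro hl
    obtain ⟨a, b, hB, ha, hb⟩ := hF.exists_isBlock (hF.lt_ht hl)
    exact ⟨_, hF.mem_tiles.mpr ⟨a, b, l, hB, rfl⟩, box_mem_strip.mpr ⟨ha, hb, rfl⟩, a,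
      hB.ht_left_le_of_lt hF ((hB.lt_iff hF h ha hb).mp hl),
      box_mem_strip.mpr ⟨le_rfl, hB.le, rfl⟩⟩

theorem profile_tiling (hF : IsProfile P F) : hF.tiling.profile = F := by
  funext x h
  refine eq_of_forall_lt_iff fun l => ?_
  rw [hF.coverInclusive_tiling.lt_profile_iff, hF.inTileBelow_tiling_iff]

end IsProfile

namespace DyckTiling

variable {n : ℕ} {T : DyckTiling n} {t : Finset (ℤ × ℤ)} {l : ℕ} {z : ℤ}

theorem CoverInclusive.link_profile_iff (hT : T.CoverInclusive) :
    Link T.lower T.profile l z ↔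
      ∃ t ∈ T.tiles, T.lower.box l z ∈ t ∧ T.lower.box l (z + 1) ∈ t := by
  simp only [Link, hT.lt_profile_iff]
  constructor
  · rintro ⟨hz, hz'⟩
    obtain ⟨t, ht, hzt, -⟩ := id hz
    obtain ⟨h₁, h₂, -⟩ := exists_box_mem_iff.mp ⟨t, ht, hzt⟩
    rcases T.lower.ht_add_one_eq_or h₁.le h₂ with up | down
    · obtain ⟨u, hu, hu', hu'', -⟩ :=
        hz'.exists_tile_adjacent hT (.inr (add_sub_cancel_right z 1).symm) (by omega)
      exact ⟨u, hu, hu'', hu'⟩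
    · obtain ⟨u, hu, hu', hu'', -⟩ := hz.exists_tile_adjacent hT (.inl rfl) (by omega)
      exact ⟨u, hu, hu', hu''⟩
  · rintro ⟨t, ht, hz, hz'⟩
    have base : ∃ y, T.lower.ht y ≤ min (T.lower.ht z) (T.lower.ht (z + 1)) ∧
        T.lower.box l y ∈ t := by
      rcases min_choice (T.lower.ht z) (T.lower.ht (z + 1)) with hmin | hmin
      · exact ⟨z, hmin.ge, hz⟩
      · exact ⟨z + 1, hmin.ge, hz'⟩
    exact ⟨⟨t, ht, hz, base⟩, t, ht, hz', base⟩

theorem CoverInclusive.exists_isBlock_of_mem (hT : T.CoverInclusive) (ht : t ∈ T.tiles) :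
    ∃ a b l, IsBlock T.lower T.profile l a b ∧ t = T.lower.strip l a b := by
  obtain ⟨a, b, l, hab, -, ht_eq⟩ := hT.exists_eq_strip ht
  have mem {x : ℤ} : T.lower.box l x ∈ t ↔ a ≤ x ∧ x ≤ b := by
    rw [ht_eq, box_mem_strip]
    tauto
  refine ⟨a, b, l, ⟨hab, fun x hx hx' => ?_, fun z hz hz' => ?_, ?_, ?_⟩, ht_eq⟩
  · have hxt := mem.mpr ⟨hx, hx'⟩
    exact hT.lt_profile_iff.mpr ⟨t, ht, hxt, x, le_rfl, hxt⟩
  · exact hT.link_profile_iff.mpr ⟨t, ht, mem.mpr ⟨hz, hz'.le⟩, mem.mpr ⟨by omega, hz'⟩⟩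
  · rw [hT.link_profile_iff, sub_add_cancel]
    rintro ⟨u, hu, hau, hau'⟩
    obtain rfl := eq_of_mem_of_mem hu ht hau' (mem.mpr ⟨le_rfl, hab⟩)
    have := mem.mp hau
    omega
  · rw [hT.link_profile_iff]
    rintro ⟨u, hu, hbu, hbu'⟩
    obtain rfl := eq_of_mem_of_mem hu ht hbu (mem.mpr ⟨hab, le_rfl⟩)
    have := mem.mp hbu'
    omega

theorem CoverInclusive.tiles_isProfile (hT : T.CoverInclusive) : hT.isProfile.tiles = T.tiles := by
  ext t
  rw [hT.isProfile.mem_tiles]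
  refine ⟨?_, hT.exists_isBlock_of_mem⟩
  rintro ⟨a, b, l, hB, rfl⟩
  obtain ⟨t, ht, ha, -⟩ := hT.lt_profile_iff.mp (hB.lt a le_rfl hB.le)
  obtain ⟨c, d, m, hC, rfl⟩ := hT.exists_isBlock_of_mem ht
  obtain ⟨hc, hd, rfl⟩ := box_mem_strip.mp ha
  obtain ⟨rfl, rfl⟩ := hB.unique hC le_rfl hB.le hc hd
  exact ht

theorem CoverInclusive.tiling_isProfile (hT : T.CoverInclusive) : hT.isProfile.tiling = T := by
  have upper_eq : hT.isProfile.upper = T.upper := DyckPath.ext_ht <| funext fun x => by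
    rw [hT.isProfile.upper_ht, hT.upper_ht]
  have tiles_eq := hT.tiles_isProfile
  cases T
  simp only [IsProfile.tiling, upper_eq, tiles_eq]

/-- A cover-inclusive Dyck tiling is determined by its profile, and every profile occurs. -/
def equivProfile (P : DyckPath n) :
    {T : DyckTiling n // T.CoverInclusive ∧ T.lower = P} ≃ {F // IsProfile P F} where
  toFun T := ⟨T.1.profile, by
    obtain ⟨T, hT, rfl⟩ := T
    exact hT.isProfile⟩
  invFun F := ⟨F.2.tiling, F.2.coverInclusive_tiling, rfl⟩
  left_inv := by
    rintro ⟨T, hT, rfl⟩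
    exact Subtype.ext hT.tiling_isProfile
  right_inv F := Subtype.ext F.2.profile_tiling

end DyckTiling

/-- For every Dyck path `λ` of order `n`,
`|D(λ,*)| = n! / Π_{chords c of λ} |c|`
(stated in the equivalent cleared-denominator form;
the product over chords is expressed via an arbitrary labeling of the chords). -/
theorem dyck_tilings_count (n : ℕ) (lam : DyckPath n) (C : ChordLabeling lam) :
    Nat.card {T : DyckTiling n // T.CoverInclusive ∧ T.lower = lam} *
        ∏ i : Fin n, chordLen C i = n.factorial := by
  rw [Nat.card_congr (DyckTiling.equivProfile lam), card_profiles, prod_chordLen]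
  have := runCount_mul_chordProd lam.toDyckWord
  rwa [lam.semilength_toDyckWord] at this

end
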